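/- arXiv:1211.3270 — 2 statements merged into one kernel-verified Lean document; each statement's English description precedes it below -/
import Mathlib

section
/- Let -1 < α < -1/2 ≤ β, let K ∈ {0,1}, k ∈ {0,1,2}, W ≥ 1, s ≥ 0 and 1 ≤ p ≤ ∞ be fixed, and define Υ_s(t,θ,φ) := (sin(θ/2)+sin(φ/2))^{Kk} ∫∫_{[-1,1]²} (t² + q(θ,φ,u,v))^{-(α+β+3/2 + W/(2p) + Kk/2 + s/2)} dπ_α^K(u) dΠ_β(v) for t ∈ (0,1), θ, φ ∈ [0,π] (with the convention W/(2p) = 0 when p = ∞), where dπ_α^K := dΠ_{-1/2} if K = 0 and dπ_α^K := dΠ_{α+1} if K = 1. Then there exists a constant C (depending only on α, β, K, k, W, s, p) such that for all θ ≠ φ in [0,π]: ‖1 + Υ_s(·,θ,φ)‖_{L^p((0,1), t^{W−1}dt)} ≤ C |θ−φ|^{-s} / μ_{α,β}(B(θ,|θ−φ|)). -/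
open MeasureTheory Real Set
open scoped ENNReal Classical

noncomputable def cab (α β : ℝ) : ℝ :=
  Real.Gamma (α + β + 2) / (2 ^ (α + β + 1) * Real.Gamma (α + 1) * Real.Gamma (β + 1))

noncomputable def F4 (a₁ a₂ b₁ b₂ x y : ℝ) : ℝ :=
  ∑' p : ℕ × ℕ,
    (Polynomial.eval a₁ (ascPochhammer ℝ (p.1 + p.2)) *
      Polynomial.eval a₂ (ascPochhammer ℝ (p.1 + p.2))) /
    (Polynomial.eval b₁ (ascPochhammer ℝ p.1) * Polynomial.eval b₂ (ascPochhammer ℝ p.2) *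
      (Nat.factorial p.1) * (Nat.factorial p.2)) * x ^ p.1 * y ^ p.2

noncomputable def Hker (α β t θ φ : ℝ) : ℝ :=
  cab α β * Real.sinh (t / 2) / Real.cosh (t / 2) ^ (α + β + 2) *
    F4 ((α + β + 2) / 2) ((α + β + 3) / 2) (α + 1) (β + 1)
      ((Real.sin (θ / 2) * Real.sin (φ / 2) / Real.cosh (t / 2)) ^ 2)
      ((Real.cos (θ / 2) * Real.cos (φ / 2) / Real.cosh (t / 2)) ^ 2)

noncomputable def qf (θ φ u v : ℝ) : ℝ :=
  1 - u * Real.sin (θ / 2) * Real.sin (φ / 2) - v * Real.cos (θ / 2) * Real.cos (φ / 2)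

noncomputable def Psi (α β t θ φ u v : ℝ) : ℝ :=
  cab α β * Real.sinh (t / 2) / (Real.cosh (t / 2) - 1 + qf θ φ u v) ^ (α + β + 2)

noncomputable def PsiE (α β t θ φ u v : ℝ) : ℝ :=
  (Psi α β t θ φ u v + Psi α β t θ φ (-u) v + Psi α β t θ φ u (-v) +
    Psi α β t θ φ (-u) (-v)) / 4

noncomputable def PiMeas (ν : ℝ) : Measure ℝ :=
  if ν = -(1/2) then (2⁻¹ : ℝ≥0∞) • (Measure.dirac (-1) + Measure.dirac 1)
  else (volume.restrict (Icc (-1 : ℝ) 1)).withDensity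
    (fun u => ENNReal.ofReal
      (Real.Gamma (ν + 1) / (Real.sqrt π * Real.Gamma (ν + 1/2)) * (1 - u ^ 2) ^ (ν - 1/2)))

noncomputable def PiFun (γ u : ℝ) : ℝ :=
  Real.Gamma (γ + 1) / (Real.sqrt π * Real.Gamma (γ + 1/2)) *
    ∫ w in (0 : ℝ)..u, (1 - w ^ 2) ^ (γ - 1/2)

noncomputable def PiInt (ν : ℝ) (S : Set ℝ) (f : ℝ → ℝ) : ℝ :=
  if ν = -(1/2) then
    ((if (-1 : ℝ) ∈ S then f (-1) else 0) + (if (1 : ℝ) ∈ S then f 1 else 0)) / 2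
  else ∫ u in S, f u *
    (Real.Gamma (ν + 1) / (Real.sqrt π * Real.Gamma (ν + 1/2)) * (1 - u ^ 2) ^ (ν - 1/2))

noncomputable def muab (α β : ℝ) : Measure ℝ :=
  (volume.restrict (Icc (0 : ℝ) π)).withDensity
    (fun θ => ENNReal.ofReal (Real.sin (θ / 2) ^ (2 * α + 1) * Real.cos (θ / 2) ^ (2 * β + 1)))

def ballI (θ r : ℝ) : Set ℝ := Ioo (θ - r) (θ + r) ∩ Icc 0 π

noncomputable def piAux (α : ℝ) (K : ℕ) : Measure ℝ :=
  if K = 0 then PiMeas (-(1/2)) else PiMeas (α + 1)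

lemma lintegral_add_rpow_mul_rpow_le {a γ D : ℝ} (ha : 0 < a) (hγ : 0 < γ) (hD : 0 < D) :
    ∫⁻ w in Ioi (0 : ℝ), ENNReal.ofReal ((D + w) ^ (-(a + γ)) * w ^ (a - 1)) ≤
      ENNReal.ofReal ((1 / a + 1 / γ) * D ^ (-γ)) := by
  have near : ∫⁻ w in Ioc (0 : ℝ) D, ENNReal.ofReal ((D + w) ^ (-(a + γ)) * w ^ (a - 1)) ≤
      ENNReal.ofReal (1 / a * D ^ (-γ)) := by
    have hint : IntegrableOn (fun w : ℝ => D ^ (-(a + γ)) * w ^ (a - 1)) (Ioc 0 D) :=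
      (((intervalIntegral.intervalIntegrable_rpow' (by linarith)).const_mul _).1)
    calc _ ≤ ∫⁻ w in Ioc (0 : ℝ) D, ENNReal.ofReal (D ^ (-(a + γ)) * w ^ (a - 1)) := by
          refine setLIntegral_mono' measurableSet_Ioc fun w hw => ENNReal.ofReal_le_ofReal ?_
          refine mul_le_mul_of_nonneg_right ?_ (rpow_nonneg hw.1.le _)
          exact rpow_le_rpow_of_nonpos hD (by linarith [hw.1]) (by linarith)
      _ = ENNReal.ofReal (1 / a * D ^ (-γ)) := by
          rw [← ofReal_integral_eq_lintegral_ofReal hint]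
          · rw [← intervalIntegral.integral_of_le hD.le, intervalIntegral.integral_const_mul,
              integral_rpow (Or.inl (by linarith)), sub_add_cancel, zero_rpow ha.ne', sub_zero,
              mul_div_assoc', ← rpow_add hD]
            congr 1
            rw [show -(a + γ) + a = -γ by ring]
            ring
          · exact (ae_restrict_iff' measurableSet_Ioc).2 (Filter.Eventually.of_forall fun w hw =>
              mul_nonneg (rpow_nonneg hD.le _) (rpow_nonneg hw.1.le _))
  have far : ∫⁻ w in Ioi D, ENNReal.ofReal ((D + w) ^ (-(a + γ)) * w ^ (a - 1)) ≤
      ENNReal.ofReal (1 / γ * D ^ (-γ)) := by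
    have hlt : -γ - 1 < -1 := by linarith
    calc _ ≤ ∫⁻ w in Ioi D, ENNReal.ofReal (w ^ (-γ - 1)) := by
          refine setLIntegral_mono' measurableSet_Ioi fun w hw => ENNReal.ofReal_le_ofReal ?_
          have hw0 : 0 < w := hD.trans hw
          calc _ ≤ w ^ (-(a + γ)) * w ^ (a - 1) :=
                mul_le_mul_of_nonneg_right
                  (rpow_le_rpow_of_nonpos hw0 (by linarith) (by linarith)) (rpow_nonneg hw0.le _)
            _ = w ^ (-γ - 1) := by rw [← rpow_add hw0]; congr 1; ring
      _ = ENNReal.ofReal (1 / γ * D ^ (-γ)) := by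
          rw [← ofReal_integral_eq_lintegral_ofReal (integrableOn_Ioi_rpow_of_lt hlt hD),
            integral_Ioi_rpow_of_lt hlt hD, sub_add_cancel]
          · congr 1; field_simp
          · exact (ae_restrict_iff' measurableSet_Ioi).2 (Filter.Eventually.of_forall fun w hw =>
              rpow_nonneg (hD.trans hw).le _)
  rw [← Ioc_union_Ioi_eq_Ioi hD.le, add_mul,
    ENNReal.ofReal_add (by positivity) (by positivity)]
  exact (lintegral_union_le _ _ _).trans (add_le_add near far)

lemma lintegral_Ioc_add_mul_rpow_le {a γ D B : ℝ} (ha : 0 < a) (hγ : 0 < γ) (hD : 0 < D)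
    (hB : 0 ≤ B) :
    ∫⁻ w in Ioc (0 : ℝ) 2, ENNReal.ofReal ((D + w * B) ^ (-(a + γ)) * w ^ (a - 1)) ≤
      ENNReal.ofReal (3 ^ (a + γ) * (1 / a + 1 / γ) * D ^ (-γ) * (D + B) ^ (-a)) := by
  have hDB : 0 < D + B := by linarith
  have hx : 0 < D / (D + B) := by positivity
  calc _ ≤ ∫⁻ w in Ioc (0 : ℝ) 2, ENNReal.ofReal (((D + B) / 3) ^ (-(a + γ))) *
        ENNReal.ofReal ((D / (D + B) + w) ^ (-(a + γ)) * w ^ (a - 1)) := by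
        refine setLIntegral_mono' measurableSet_Ioc fun w hw => ?_
        have hw0 := hw.1
        have hw2 := hw.2
        rw [← ENNReal.ofReal_mul (by positivity)]
        refine ENNReal.ofReal_le_ofReal ?_
        rw [← mul_assoc, ← mul_rpow (by positivity) (by positivity)]
        refine mul_le_mul_of_nonneg_right ?_ (by positivity)
        refine rpow_le_rpow_of_nonpos (by positivity) ?_ (by linarith)
        have : (D + B) / 3 * (D / (D + B) + w) = (D + (D + B) * w) / 3 := by field_simp
        rw [this]
        nlinarith [mul_nonneg hw0.le hB, mul_nonneg hD.le (sub_nonneg.2 hw2)]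
    _ ≤ ENNReal.ofReal (((D + B) / 3) ^ (-(a + γ))) *
          ENNReal.ofReal ((1 / a + 1 / γ) * (D / (D + B)) ^ (-γ)) := by
        rw [lintegral_const_mul' _ _ ENNReal.ofReal_ne_top]
        gcongr
        exact (lintegral_mono_set Ioc_subset_Ioi_self).trans
          (lintegral_add_rpow_mul_rpow_le ha hγ hx)
    _ = _ := by
        rw [← ENNReal.ofReal_mul (by positivity)]
        congr 1
        rw [div_rpow hDB.le (by norm_num), div_rpow hD.le hDB.le, rpow_neg (by norm_num : (0:ℝ) ≤ 3),
          show -(a + γ) = -a + -γ by ring, rpow_add hDB]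
        have := (rpow_pos_of_pos hDB (-γ)).ne'
        field_simp

lemma ae_mem_Icc_PiMeas (ν : ℝ) : ∀ᵐ u ∂PiMeas ν, u ∈ Icc (-1 : ℝ) 1 := by
  unfold PiMeas
  split_ifs
  · refine Measure.ae_smul_measure ?_ _
    rw [ae_add_measure_iff, ae_dirac_iff (p := fun u => u ∈ Icc (-1 : ℝ) 1) measurableSet_Icc,
      ae_dirac_iff (p := fun u => u ∈ Icc (-1 : ℝ) 1) measurableSet_Icc]
    norm_num
  · exact (withDensity_absolutelyContinuous _ _).ae_le (ae_restrict_mem measurableSet_Icc)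

lemma rpow_one_sub_sq_le (b : ℝ) {x : ℝ} (hx : 0 ≤ x) (hx1 : x ≤ 1) :
    (1 - x ^ 2) ^ b ≤ 2 ^ |b| * (1 - x) ^ b := by
  rw [show 1 - x ^ 2 = (1 + x) * (1 - x) by ring, mul_rpow (by linarith) (by linarith)]
  refine mul_le_mul_of_nonneg_right ?_ (rpow_nonneg (by linarith) _)
  exact (rpow_le_rpow_of_exponent_le (by linarith) (le_abs_self b)).trans
    (rpow_le_rpow (by linarith) (by linarith) (abs_nonneg b))

lemma exists_lintegral_PiMeas_rpow_le {ν γ : ℝ} (hν : -(1 / 2) ≤ ν) (hγ : 0 < γ) :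
    ∃ C : ℝ, 0 < C ∧ ∀ D B : ℝ, 0 < D → 0 ≤ B →
      ∫⁻ u, ENNReal.ofReal ((D + (1 - u) * B) ^ (-(ν + 1 / 2 + γ))) ∂PiMeas ν ≤
        ENNReal.ofReal (C * D ^ (-γ) * (D + B) ^ (-(ν + 1 / 2))) := by
  rcases hν.eq_or_lt with rfl | hν
  · refine ⟨1, one_pos, fun D B hD hB => ?_⟩
    have h1 : ∀ᵐ u ∂PiMeas (-(1 / 2)), ENNReal.ofReal ((D + (1 - u) * B) ^
        (-(-(1 / 2) + 1 / 2 + γ))) ≤ ENNReal.ofReal (D ^ (-γ)) := by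
      filter_upwards [ae_mem_Icc_PiMeas (-(1 / 2))] with u hu
      refine ENNReal.ofReal_le_ofReal ?_
      rw [show -(-(1 / 2) + 1 / 2 + γ) = -γ by ring]
      exact rpow_le_rpow_of_nonpos hD (by nlinarith [hu.2]) (by linarith)
    refine (lintegral_mono_ae h1).trans ?_
    have h2 : PiMeas (-(1 / 2)) univ = 1 := by
      simp only [PiMeas, if_true, Measure.smul_apply, Measure.add_apply, measure_univ, smul_eq_mul]
      rw [one_add_one_eq_two]
      exact ENNReal.inv_mul_cancel (by norm_num) (by norm_num)
    rw [lintegral_const, h2]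
    simp
  · have ha : 0 < ν + 1 / 2 := by linarith
    set k := Real.Gamma (ν + 1) / (√π * Real.Gamma (ν + 1 / 2)) with hk
    have hk0 : 0 < k := by
      have := Gamma_pos_of_pos ha
      have := Gamma_pos_of_pos (show 0 < ν + 1 by linarith)
      positivity
    refine ⟨2 * (k * 2 ^ |ν - 1 / 2|) *
      (3 ^ (ν + 1 / 2 + γ) * (1 / (ν + 1 / 2) + 1 / γ)), by positivity, fun D B hD hB => ?_⟩
    set G : ℝ → ℝ≥0∞ := fun w => (Ioc (0 : ℝ) 2).indicator (fun w =>
      ENNReal.ofReal ((D + w * B) ^ (-(ν + 1 / 2 + γ)) * w ^ (ν + 1 / 2 - 1))) w with hG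
    have hGm : Measurable G := Measurable.indicator (by fun_prop) measurableSet_Ioc
    have hGi : ∫⁻ w, G w ≤ ENNReal.ofReal (3 ^ (ν + 1 / 2 + γ) *
        (1 / (ν + 1 / 2) + 1 / γ) * D ^ (-γ) * (D + B) ^ (-(ν + 1 / 2))) := by
      rw [hG, lintegral_indicator measurableSet_Ioc]
      exact lintegral_Ioc_add_mul_rpow_le ha hγ hD hB
    have key : ∀ x ∈ Ico (0 : ℝ) 1, ∀ u : ℝ, u ≤ x → u ^ 2 = x ^ 2 →
        ENNReal.ofReal (k * (1 - u ^ 2) ^ (ν - 1 / 2)) *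
          ENNReal.ofReal ((D + (1 - u) * B) ^ (-(ν + 1 / 2 + γ))) ≤
        ENNReal.ofReal (k * 2 ^ |ν - 1 / 2|) * G (1 - x) := by
      intro x hx u hux hsq
      have hx1 : 0 < 1 - x := by linarith [hx.2]
      have hmem : 1 - x ∈ Ioc (0 : ℝ) 2 := ⟨hx1, by linarith [hx.1]⟩
      simp only [hG, indicator_of_mem hmem]
      rw [← ENNReal.ofReal_mul' (rpow_nonneg (by nlinarith) _),
        ← ENNReal.ofReal_mul (by positivity), hsq]
      refine ENNReal.ofReal_le_ofReal ?_
      have e1 := rpow_one_sub_sq_le (ν - 1 / 2) hx.1 hx.2.le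
      have e2 : (D + (1 - u) * B) ^ (-(ν + 1 / 2 + γ)) ≤
          (D + (1 - x) * B) ^ (-(ν + 1 / 2 + γ)) :=
        rpow_le_rpow_of_nonpos (by positivity) (by nlinarith) (by linarith)
      calc _ ≤ k * (2 ^ |ν - 1 / 2| * (1 - x) ^ (ν - 1 / 2)) *
            (D + (1 - x) * B) ^ (-(ν + 1 / 2 + γ)) := by
            refine mul_le_mul (mul_le_mul_of_nonneg_left e1 hk0.le) e2
              (rpow_nonneg (by nlinarith) _) (by positivity)
        _ = _ := by
            rw [show ν + 1 / 2 - 1 = ν - 1 / 2 by ring]; ring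
    unfold PiMeas
    rw [if_neg hν.ne', lintegral_withDensity_eq_lintegral_mul _ (by fun_prop) (by fun_prop)]
    calc _ ≤ ∫⁻ u in Icc (-1 : ℝ) 1, ENNReal.ofReal (k * 2 ^ |ν - 1 / 2|) *
          (G (1 - u) + G (1 + u)) := by
          have hne : ∀ᵐ u : ℝ ∂volume.restrict (Icc (-1 : ℝ) 1), u ∉ ({-1, 1} : Set ℝ) :=
            ae_restrict_of_ae ((toFinite _).countable.ae_notMem _)
          refine lintegral_mono_ae ?_
          filter_upwards [ae_restrict_mem measurableSet_Icc, hne] with u hu hu'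
          have h1 : u ≠ -1 := fun h => hu' (by simp [h])
          have h2 : u ≠ 1 := fun h => hu' (by simp [h])
          have h3 := lt_of_le_of_ne hu.1 h1.symm
          have h4 := lt_of_le_of_ne hu.2 h2
          rcases le_total 0 u with h | h
          · refine (key u ⟨h, h4⟩ u le_rfl rfl).trans ?_
            gcongr
            exact le_self_add
          · refine (key (-u) ⟨by linarith, by linarith⟩ u (by linarith) (by ring)).trans ?_
            rw [sub_neg_eq_add]
            gcongr
            exact le_add_self
      _ ≤ ∫⁻ u : ℝ, ENNReal.ofReal (k * 2 ^ |ν - 1 / 2|) * (G (1 - u) + G (1 + u)) :=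
          setLIntegral_le_lintegral _ _
      _ = ENNReal.ofReal (k * 2 ^ |ν - 1 / 2|) * ((∫⁻ w, G w) + ∫⁻ w, G w) := by
          rw [lintegral_const_mul' _ _ ENNReal.ofReal_ne_top, lintegral_add_left (by fun_prop),
            lintegral_sub_left_eq_self, lintegral_add_left_eq_self]
      _ ≤ _ := by
          refine (mul_le_mul_right (add_le_add hGi hGi) _).trans ?_
          rw [← ENNReal.ofReal_add (by positivity) (by positivity),
            ← ENNReal.ofReal_mul (by positivity)]
          refine ENNReal.ofReal_le_ofReal (le_of_eq ?_)
          ring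

lemma sin_half_nonneg {x : ℝ} (hx : x ∈ Icc 0 π) : 0 ≤ sin (x / 2) :=
  sin_nonneg_of_nonneg_of_le_pi (by linarith [hx.1]) (by linarith [hx.1, hx.2])

lemma cos_half_nonneg {x : ℝ} (hx : x ∈ Icc 0 π) : 0 ≤ cos (x / 2) :=
  cos_nonneg_of_mem_Icc ⟨by linarith [hx.1, pi_pos], by linarith [hx.2]⟩

lemma div_pi_le_sin_half {x : ℝ} (hx : x ∈ Icc 0 π) : x / π ≤ sin (x / 2) := by
  have := mul_le_sin (show 0 ≤ x / 2 by linarith [hx.1]) (by linarith [hx.2])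
  calc x / π = 2 / π * (x / 2) := by field_simp
    _ ≤ _ := this

lemma sq_div_le_add_sin_mul_sin {x y : ℝ} (hx : x ∈ Icc 0 π) (hy : y ∈ Icc 0 π) :
    (x + |x - y|) ^ 2 / 80 ≤ |x - y| ^ 2 / 20 + sin (x / 2) * sin (y / 2) := by
  have hπ := pi_pos
  have h10 : π ^ 2 ≤ 10 := by nlinarith [pi_lt_d2]
  have hxy : 0 ≤ x * y := mul_nonneg hx.1 hy.1
  have h1 : x * y / 10 ≤ sin (x / 2) * sin (y / 2) :=
    calc x * y / 10 ≤ x * y / π ^ 2 := by gcongr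
      _ = x / π * (y / π) := by ring
      _ ≤ _ := mul_le_mul (div_pi_le_sin_half hx) (div_pi_le_sin_half hy) (div_nonneg hy.1 hπ.le)
        ((div_nonneg hx.1 hπ.le).trans (div_pi_le_sin_half hx))
  have h2 : |x - y| ^ 2 = (x - y) ^ 2 := sq_abs _
  nlinarith [sq_nonneg (x - |x - y|)]

lemma sq_div_le_add_cos_mul_cos {x y : ℝ} (hx : x ∈ Icc 0 π) (hy : y ∈ Icc 0 π) :
    (π - x + |x - y|) ^ 2 / 80 ≤ |x - y| ^ 2 / 20 + cos (x / 2) * cos (y / 2) := by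
  have := sq_div_le_add_sin_mul_sin (x := π - x) (y := π - y)
    ⟨by linarith [hx.2], by linarith [hx.1]⟩ ⟨by linarith [hy.2], by linarith [hy.1]⟩
  rwa [show π - x - (π - y) = -(x - y) by ring, abs_neg, sub_div, sub_div, sin_pi_div_two_sub,
    sin_pi_div_two_sub] at this

lemma le_qf {θ φ : ℝ} (hθ : θ ∈ Icc 0 π) (hφ : φ ∈ Icc 0 π) (u v : ℝ) :
    |θ - φ| ^ 2 / 20 + (1 - u) * (sin (θ / 2) * sin (φ / 2)) +
      (1 - v) * (cos (θ / 2) * cos (φ / 2)) ≤ qf θ φ u v := by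
  have hπ := pi_pos
  have h10 : π ^ 2 ≤ 10 := by nlinarith [pi_lt_d2]
  have hc : cos ((θ - φ) / 2) ≤ 1 - 2 / π ^ 2 * ((θ - φ) / 2) ^ 2 := by
    refine cos_le_one_sub_mul_cos_sq ?_
    rw [abs_le]
    constructor <;> linarith [hθ.1, hθ.2, hφ.1, hφ.2]
  have h1 : |θ - φ| ^ 2 / 20 ≤ 2 / π ^ 2 * ((θ - φ) / 2) ^ 2 := by
    rw [sq_abs]
    calc (θ - φ) ^ 2 / 20 ≤ (θ - φ) ^ 2 / (2 * π ^ 2) := by gcongr; linarith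
      _ = _ := by field_simp
  rw [sub_div, cos_sub] at hc
  unfold qf
  nlinarith

lemma exists_eLpNorm_add_rpow_le {W ε : ℝ} (hW : 0 < W) (hε : 0 < ε) {p : ℝ≥0∞} (hp : 1 ≤ p) :
    ∃ C : ℝ, 0 < C ∧ ∀ r : ℝ, 0 < r →
      eLpNorm (fun t : ℝ => (t + r) ^ (-(W / p.toReal + 2 * ε))) p
        ((volume.restrict (Ioo (0 : ℝ) 1)).withDensity
          (fun t => ENNReal.ofReal (t ^ (W - 1)))) ≤ ENNReal.ofReal (C * r ^ (-(2 * ε))) := by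
  have hmem : ∀ᵐ t ∂(volume.restrict (Ioo (0 : ℝ) 1)).withDensity
      (fun t => ENNReal.ofReal (t ^ (W - 1))), t ∈ Ioo (0 : ℝ) 1 :=
    (withDensity_absolutelyContinuous _ _).ae_le (ae_restrict_mem measurableSet_Ioo)
  rcases eq_or_ne p ∞ with rfl | hpt
  · refine ⟨1, one_pos, fun r hr => ?_⟩
    rw [eLpNorm_exponent_top]
    refine eLpNormEssSup_le_of_ae_enorm_bound ?_
    filter_upwards [hmem] with t ht
    have := ht.1
    rw [ENNReal.toReal_top, div_zero, zero_add, one_mul, Real.enorm_of_nonneg (by positivity)]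
    exact ENNReal.ofReal_le_ofReal (rpow_le_rpow_of_nonpos hr (by linarith) (by linarith))
  · have hp0 : p ≠ 0 := (one_pos.trans_le hp).ne'
    have hq : 0 < p.toReal := ENNReal.toReal_pos hp0 hpt
    set q := p.toReal with hqdef
    have hγ : 0 < 2 * ε * q := by positivity
    refine ⟨(1 / W + 1 / (2 * ε * q)) ^ (1 / q), by positivity, fun r hr => ?_⟩
    rw [eLpNorm_eq_lintegral_rpow_enorm_toReal hp0 hpt, ← hqdef,
      lintegral_withDensity_eq_lintegral_mul _ (by fun_prop) (by fun_prop)]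
    have h1 : ∫⁻ t in Ioo (0 : ℝ) 1, ((fun t => ENNReal.ofReal (t ^ (W - 1))) *
        fun t => ‖(t + r) ^ (-(W / q + 2 * ε))‖ₑ ^ q) t ≤
        ENNReal.ofReal ((1 / W + 1 / (2 * ε * q)) * r ^ (-(2 * ε * q))) := by
      refine le_trans ?_ (lintegral_add_rpow_mul_rpow_le hW hγ hr)
      refine le_trans (setLIntegral_mono' measurableSet_Ioo fun t ht => ?_)
        (lintegral_mono_set Ioo_subset_Ioi_self)
      have ht0 := ht.1
      rw [Pi.mul_apply, Real.enorm_of_nonneg (by positivity),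
        ENNReal.ofReal_rpow_of_nonneg (by positivity) hq.le, ← rpow_mul (by positivity), mul_comm,
        ← ENNReal.ofReal_mul (by positivity), add_comm t r]
      refine le_of_eq ?_
      congr 3
      field_simp
    refine (ENNReal.rpow_le_rpow h1 (by positivity)).trans ?_
    rw [ENNReal.ofReal_rpow_of_nonneg (by positivity) (by positivity),
      mul_rpow (by positivity) (by positivity), ← rpow_mul hr.le]
    refine le_of_eq ?_
    congr 3
    field_simp

lemma setLIntegral_Icc_rpow_le {b m y : ℝ} (hb : -1 < b) (hb0 : b ≤ 0) (hm : 0 ≤ m) (hmy : m ≤ y) :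
    ∫⁻ x in Icc m y, ENNReal.ofReal (x ^ b) ≤ ENNReal.ofReal ((y - m) * y ^ b / (b + 1)) := by
  have hb1 : 0 < b + 1 := by linarith
  rw [setLIntegral_congr Ioc_ae_eq_Icc.symm, ← ofReal_integral_eq_lintegral_ofReal]
  · rw [← intervalIntegral.integral_of_le hmy, integral_rpow (Or.inl hb)]
    refine ENNReal.ofReal_le_ofReal ?_
    gcongr
    rcases hm.eq_or_lt with rfl | hm0
    · rw [zero_rpow hb1.ne', sub_zero, sub_zero]
      rcases hmy.eq_or_lt with rfl | hy
      · rw [zero_rpow hb1.ne', zero_mul]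
      · rw [rpow_add_one hy.ne', mul_comm]
    · rw [rpow_add_one hm0.ne', rpow_add_one (hm0.trans_le hmy).ne']
      nlinarith [rpow_le_rpow_of_nonpos hm0 hmy hb0]
  · exact (intervalIntegral.intervalIntegrable_rpow' hb).1
  · exact (ae_restrict_iff' measurableSet_Ioc).2 (Filter.Eventually.of_forall fun w hw =>
      rpow_nonneg (hm.trans hw.1.le) _)

lemma muab_apply (α β : ℝ) {s : Set ℝ} (hs : MeasurableSet s) :
    muab α β s = ∫⁻ x in s ∩ Icc 0 π,
      ENNReal.ofReal (sin (x / 2) ^ (2 * α + 1) * cos (x / 2) ^ (2 * β + 1)) := by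
  rw [muab, withDensity_apply _ hs, Measure.restrict_restrict hs]

lemma measurableSet_ballI (θ r : ℝ) : MeasurableSet (ballI θ r) :=
  measurableSet_Ioo.inter measurableSet_Icc

lemma exists_muab_ballI_le {α β : ℝ} (hα₁ : -1 < α) (hα₂ : α < -(1 / 2)) (hβ : -(1 / 2) ≤ β) :
    ∃ C : ℝ, 0 < C ∧ ∀ θ ∈ Icc (0 : ℝ) π, ∀ r : ℝ, 0 < r →
      muab α β (ballI θ r) ≤
        ENNReal.ofReal (C * (r * (θ + r) ^ (2 * α + 1) * (π - θ + r) ^ (2 * β + 1))) := by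
  have hb : -1 < 2 * α + 1 := by linarith
  have hb1 : 0 < 2 * α + 1 + 1 := by linarith
  have hb0 : 2 * α + 1 < 0 := by linarith
  have hπ := pi_pos
  refine ⟨π⁻¹ ^ (2 * α + 1) * 2 / (2 * α + 1 + 1), by positivity, fun θ hθ r hr => ?_⟩
  have hP : 0 ≤ π - θ + r := by linarith [hθ.2]
  have hR : 0 < θ + r := by linarith [hθ.1]
  set m := max (θ - r) 0
  have hm : 0 ≤ m := le_max_right _ _
  have hsub : ballI θ r ∩ Icc 0 π ⊆ Icc m (θ + r) := fun x hx =>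
    ⟨max_le hx.1.1.1.le hx.2.1, hx.1.1.2.le⟩
  rw [muab_apply _ _ (measurableSet_ballI _ _)]
  calc _ ≤ ∫⁻ x in ballI θ r ∩ Icc 0 π,
        ENNReal.ofReal (π⁻¹ ^ (2 * α + 1) * (π - θ + r) ^ (2 * β + 1)) *
          ENNReal.ofReal (x ^ (2 * α + 1)) := by
        refine setLIntegral_mono' ((measurableSet_ballI _ _).inter measurableSet_Icc)
          fun x hx => ?_
        obtain ⟨⟨hx1, -⟩, hx2⟩ := hx
        rw [← ENNReal.ofReal_mul (by positivity)]
        refine ENNReal.ofReal_le_ofReal ?_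
        rcases hx2.1.eq_or_lt with rfl | hx0
        · simp [zero_rpow hb0.ne]
        have hs : π⁻¹ * x ≤ sin (x / 2) := by
          rw [inv_mul_eq_div]
          exact div_pi_le_sin_half hx2
        have hc0 : 0 ≤ cos (x / 2) := cos_half_nonneg hx2
        have hc : cos (x / 2) ≤ π - θ + r := by
          rw [← sin_pi_div_two_sub]
          refine (sin_le (by linarith [hx2.2])).trans ?_
          linarith [hx1.1, hx2.2]
        calc _ ≤ (π⁻¹ * x) ^ (2 * α + 1) * (π - θ + r) ^ (2 * β + 1) := by
              refine mul_le_mul (rpow_le_rpow_of_nonpos (by positivity) hs hb0.le)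
                (rpow_le_rpow hc0 hc (by linarith)) (by positivity) (by positivity)
          _ = _ := by rw [mul_rpow (by positivity) hx0.le]; ring
    _ ≤ ENNReal.ofReal (π⁻¹ ^ (2 * α + 1) * (π - θ + r) ^ (2 * β + 1)) *
          ENNReal.ofReal ((θ + r - m) * (θ + r) ^ (2 * α + 1) / (2 * α + 1 + 1)) := by
        rw [lintegral_const_mul' _ _ ENNReal.ofReal_ne_top]
        gcongr
        exact (lintegral_mono_set hsub).trans
          (setLIntegral_Icc_rpow_le hb hb0.le hm (max_le (by linarith) hR.le))
    _ ≤ _ := by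
        rw [← ENNReal.ofReal_mul (by positivity)]
        refine ENNReal.ofReal_le_ofReal ?_
        calc _ ≤ π⁻¹ ^ (2 * α + 1) * (π - θ + r) ^ (2 * β + 1) *
              ((2 * r) * (θ + r) ^ (2 * α + 1) / (2 * α + 1 + 1)) := by
              gcongr
              linarith [le_max_left (θ - r) 0]
          _ = _ := by ring

lemma muab_ballI_ne_zero (α β : ℝ) {θ φ : ℝ} (hθ : θ ∈ Icc 0 π) (hφ : φ ∈ Icc 0 π) (h : θ ≠ φ) :
    muab α β (ballI θ |θ - φ|) ≠ 0 := by
  have hsub : Ioo (min θ φ) (max θ φ) ⊆ ballI θ |θ - φ| ∩ Icc 0 π := by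
    intro x hx
    have h0 : 0 ≤ x := (le_min hθ.1 hφ.1).trans hx.1.le
    have h1 : x ≤ π := hx.2.le.trans (max_le hθ.2 hφ.2)
    refine ⟨⟨?_, h0, h1⟩, h0, h1⟩
    rcases lt_or_gt_of_ne h with hlt | hlt
    · rw [min_eq_left hlt.le, max_eq_right hlt.le] at hx
      rw [abs_of_neg (by linarith)]
      exact ⟨by linarith [hx.1], by linarith [hx.2]⟩
    · rw [min_eq_right hlt.le, max_eq_left hlt.le] at hx
      rw [abs_of_pos (by linarith)]
      exact ⟨by linarith [hx.1], by linarith [hx.2]⟩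
  rw [muab_apply _ _ (measurableSet_ballI _ _)]
  refine (lt_of_lt_of_le ?_ (lintegral_mono_set hsub)).ne'
  rw [setLIntegral_pos_iff (by fun_prop)]
  have : Function.support (fun x : ℝ => ENNReal.ofReal
      (sin (x / 2) ^ (2 * α + 1) * cos (x / 2) ^ (2 * β + 1))) ∩ Ioo (min θ φ) (max θ φ) =
      Ioo (min θ φ) (max θ φ) := by
    refine inter_eq_right.2 fun x hx => ?_
    have h0 : 0 < x := (le_min hθ.1 hφ.1).trans_lt hx.1
    have h1 : x < π := hx.2.trans_le (max_le hθ.2 hφ.2)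
    have := sin_pos_of_pos_of_lt_pi (show 0 < x / 2 by linarith) (by linarith)
    have := cos_pos_of_mem_Ioo (x := x / 2) ⟨by linarith, by linarith⟩
    exact (ENNReal.ofReal_pos.2 (by positivity)).ne'
  rw [this, Real.volume_Ioo, ENNReal.ofReal_pos, sub_pos]
  exact min_lt_max.2 h

lemma ae_mem_Icc_piAux (α : ℝ) (K : ℕ) : ∀ᵐ u ∂piAux α K, u ∈ Icc (-1 : ℝ) 1 := by
  unfold piAux
  split_ifs <;> exact ae_mem_Icc_PiMeas _

lemma sq_div_rpow {x c : ℝ} (hx : 0 ≤ x) (hc : 0 < c) (y : ℝ) :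
    (x ^ 2 / c) ^ (-y) = c ^ y * x ^ (-(2 * y)) := by
  rw [div_rpow (sq_nonneg x) hc.le, rpow_neg hc.le, div_inv_eq_mul, ← rpow_natCast x 2,
    ← rpow_mul hx, mul_comm]
  congr 2
  push_cast
  ring

lemma exists_lintegral_PiMeas_rpow_le_mul {ν γ : ℝ} (hν : -(1 / 2) ≤ ν) (hγ : 0 < γ) :
    ∃ C : ℝ, 0 < C ∧ ∀ r R B : ℝ, 0 < r → 0 < R → 0 ≤ B → R ^ 2 / 80 ≤ r ^ 2 / 20 + B →
      ∫⁻ u, ENNReal.ofReal ((r ^ 2 / 20 + (1 - u) * B) ^ (-(ν + 1 / 2 + γ))) ∂PiMeas ν ≤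
        ENNReal.ofReal (C * r ^ (-(2 * γ)) * R ^ (-(2 * ν + 1))) := by
  obtain ⟨C, hC, h⟩ := exists_lintegral_PiMeas_rpow_le hν hγ
  refine ⟨C * 20 ^ γ * 80 ^ (ν + 1 / 2), by positivity, fun r R B hr hR hB hRB => ?_⟩
  refine (h (r ^ 2 / 20) B (by positivity) hB).trans (ENNReal.ofReal_le_ofReal ?_)
  have h1 : (r ^ 2 / 20 + B) ^ (-(ν + 1 / 2)) ≤ 80 ^ (ν + 1 / 2) * R ^ (-(2 * ν + 1)) := by
    refine (rpow_le_rpow_of_nonpos (by positivity) hRB (by linarith)).trans (le_of_eq ?_)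
    rw [sq_div_rpow hR.le (by norm_num)]
    congr 2
    ring
  rw [sq_div_rpow hr.le (by norm_num)]
  calc _ ≤ C * (20 ^ γ * r ^ (-(2 * γ))) * (80 ^ (ν + 1 / 2) * R ^ (-(2 * ν + 1))) := by
        gcongr
    _ = _ := by ring

lemma pow_mul_rpow_le {S R D e : ℝ} {k : ℕ} (hk : k ≤ 2) (hS : 0 ≤ S) (hSR : S ≤ R) (hD : 0 < D)
    (hDR : D ≤ R ^ 2) :
    S ^ k * D ^ (-(e + (k : ℝ) / 2)) ≤ R ^ 2 * D ^ (-(e + 1)) := by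
  have hR0 : 0 ≤ R := hS.trans hSR
  have hk' : (k : ℝ) ≤ 2 := by exact_mod_cast hk
  have key : R ^ k ≤ R ^ 2 * D ^ (-(1 - (k : ℝ) / 2)) := by
    have h1 : (R ^ 2) ^ (1 - (k : ℝ) / 2) * D ^ (-(1 - (k : ℝ) / 2)) ≥ 1 := by
      rw [rpow_neg hD.le, ← div_eq_mul_inv, ge_iff_le, one_le_div (by positivity)]
      exact rpow_le_rpow hD.le hDR (by linarith)
    have hRpos : 0 < R := by
      rcases hR0.eq_or_lt with rfl | h
      · norm_num at hDR; linarith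
      · exact h
    have h2 : R ^ 2 = R ^ k * (R ^ 2) ^ (1 - (k : ℝ) / 2) := by
      rw [← rpow_natCast R k, ← rpow_natCast R 2, ← rpow_mul hR0, ← rpow_add hRpos]
      congr 1
      push_cast
      ring
    rw [h2, mul_assoc]
    exact le_mul_of_one_le_right (by positivity) h1
  calc S ^ k * D ^ (-(e + (k : ℝ) / 2)) ≤
      (R ^ 2 * D ^ (-(1 - (k : ℝ) / 2))) * D ^ (-(e + (k : ℝ) / 2)) := by
        gcongr
        exact (pow_le_pow_left₀ hS hSR k).trans key
    _ = _ := by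
        rw [mul_assoc, ← rpow_add hD]
        congr 2
        ring

lemma exists_pow_mul_lintegral_piAux_le {α ε : ℝ} (hα₂ : α < -(1 / 2)) (hε : 0 < ε)
    (hε' : 4 * ε ≤ α + 1) {K k : ℕ} (hK : K ≤ 1) (hk : k ≤ 2) :
    ∃ C : ℝ, 0 < C ∧ ∀ θ ∈ Icc (0 : ℝ) π, ∀ φ ∈ Icc (0 : ℝ) π, θ ≠ φ →
      ENNReal.ofReal ((sin (θ / 2) + sin (φ / 2)) ^ (K * k)) *
        ∫⁻ u, ENNReal.ofReal ((|θ - φ| ^ 2 / 20 + (1 - u) * (sin (θ / 2) * sin (φ / 2))) ^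
          (-(α + 1 - 2 * ε + (K * k : ℕ) / 2))) ∂piAux α K ≤
      ENNReal.ofReal (C * |θ - φ| ^ (-1 + 4 * ε) * (θ + |θ - φ|) ^ (-(2 * α + 1))) := by
  interval_cases K
  · obtain ⟨C, hC, h⟩ := exists_lintegral_PiMeas_rpow_le_mul (ν := -(1 / 2))
      (γ := α + 1 - 2 * ε) le_rfl (by linarith)
    refine ⟨C, hC, fun θ hθ φ hφ hne => ?_⟩
    have hr : 0 < |θ - φ| := abs_pos.2 (sub_ne_zero.2 hne)
    have hR : 0 < θ + |θ - φ| := by linarith [hθ.1]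
    simp only [zero_mul, pow_zero, ENNReal.ofReal_one, one_mul, piAux, if_true, Nat.cast_zero,
      zero_div, add_zero]
    have := h _ _ _ hr hR (mul_nonneg (sin_half_nonneg hθ) (sin_half_nonneg hφ)) (sq_div_le_add_sin_mul_sin hθ hφ)
    rw [show -(1 / 2) + 1 / 2 + (α + 1 - 2 * ε) = α + 1 - 2 * ε by ring] at this
    refine this.trans (ENNReal.ofReal_le_ofReal ?_)
    rw [show -(2 * -(1 / 2) + 1) = (0 : ℝ) by ring, rpow_zero, mul_one, mul_assoc]
    gcongr
    calc |θ - φ| ^ (-(2 * (α + 1 - 2 * ε))) =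
        |θ - φ| ^ (-1 + 4 * ε) * |θ - φ| ^ (-(2 * α + 1)) := by
          rw [← rpow_add hr]; congr 1; ring
      _ ≤ _ := by
          gcongr
          · linarith
          · linarith [hθ.1]
  · obtain ⟨C, hC, h⟩ := exists_lintegral_PiMeas_rpow_le_mul (ν := α + 1)
      (γ := 1 / 2 - 2 * ε) (by linarith) (by linarith)
    refine ⟨C, hC, fun θ hθ φ hφ hne => ?_⟩
    have hr : 0 < |θ - φ| := abs_pos.2 (sub_ne_zero.2 hne)
    have hR : 0 < θ + |θ - φ| := by linarith [hθ.1]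
    have hB := mul_nonneg (sin_half_nonneg hθ) (sin_half_nonneg hφ)
    have hφR : φ ≤ θ + |θ - φ| := by linarith [neg_abs_le (θ - φ)]
    have hs1 : sin (θ / 2) ≤ (θ + |θ - φ|) / 2 :=
      (sin_le (by linarith [hθ.1])).trans (by linarith)
    have hs2 : sin (φ / 2) ≤ (θ + |θ - φ|) / 2 :=
      (sin_le (by linarith [hφ.1])).trans (by linarith)
    have hBR : sin (θ / 2) * sin (φ / 2) ≤ (θ + |θ - φ|) ^ 2 / 4 :=
      (mul_le_mul hs1 hs2 (sin_half_nonneg hφ) (by positivity)).trans (le_of_eq (by ring))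
    have hrR : |θ - φ| ^ 2 ≤ (θ + |θ - φ|) ^ 2 :=
      pow_le_pow_left₀ hr.le (by linarith [hθ.1]) 2
    simp only [one_mul, piAux, one_ne_zero, if_false]
    rw [← lintegral_const_mul' _ _ ENNReal.ofReal_ne_top]
    calc _ ≤ ∫⁻ u, ENNReal.ofReal ((θ + |θ - φ|) ^ 2) * ENNReal.ofReal
          ((|θ - φ| ^ 2 / 20 + (1 - u) * (sin (θ / 2) * sin (φ / 2))) ^
            (-(α + 1 + 1 / 2 + (1 / 2 - 2 * ε)))) ∂PiMeas (α + 1) := by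
          refine lintegral_mono_ae ?_
          filter_upwards [ae_mem_Icc_PiMeas (α + 1)] with u hu
          have hD : 0 < |θ - φ| ^ 2 / 20 + (1 - u) * (sin (θ / 2) * sin (φ / 2)) := by
            nlinarith [mul_nonneg (sub_nonneg.2 hu.2) hB, pow_pos hr 2]
          rw [← ENNReal.ofReal_mul (pow_nonneg (add_nonneg (sin_half_nonneg hθ) (sin_half_nonneg hφ)) _),
            ← ENNReal.ofReal_mul (by positivity)]
          refine ENNReal.ofReal_le_ofReal ?_
          refine (pow_mul_rpow_le hk (add_nonneg (sin_half_nonneg hθ) (sin_half_nonneg hφ)) (R := θ + |θ - φ|)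
            (by linarith) hD ?_).trans (le_of_eq ?_)
          · nlinarith [mul_nonneg (neg_le_iff_add_nonneg'.1 hu.1) hB]
          · congr 2
            ring
      _ ≤ ENNReal.ofReal ((θ + |θ - φ|) ^ 2) * ENNReal.ofReal (C *
            |θ - φ| ^ (-(2 * (1 / 2 - 2 * ε))) * (θ + |θ - φ|) ^ (-(2 * (α + 1) + 1))) := by
          rw [lintegral_const_mul' _ _ ENNReal.ofReal_ne_top]
          gcongr
          exact h _ _ _ hr hR hB (sq_div_le_add_sin_mul_sin hθ hφ)
      _ = _ := by
          rw [← ENNReal.ofReal_mul (by positivity), mul_left_comm, ← rpow_natCast _ 2,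
            ← rpow_add hR]
          congr 3
          · congr 1; ring
          · push_cast; ring

lemma kernel_rpow_le {a b w n s ε t θ φ u v : ℝ} (ha : 0 ≤ a) (hb : 0 ≤ b) (hw : 0 ≤ w)
    (hs : 0 ≤ s) (hε : 0 ≤ ε) (ht : 0 ≤ t) (hθ : θ ∈ Icc 0 π) (hφ : φ ∈ Icc 0 π) (hne : θ ≠ φ)
    (hu : u ≤ 1) (hv : v ≤ 1) (hn : n = w / 2 + ε + s / 2 + a + b) :
    (t ^ 2 + qf θ φ u v) ^ (-n) ≤
      40 ^ (w / 2 + ε) * (t + |θ - φ|) ^ (-(w + 2 * ε)) * (20 ^ (s / 2) * |θ - φ| ^ (-s)) *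
      ((|θ - φ| ^ 2 / 20 + (1 - u) * (sin (θ / 2) * sin (φ / 2))) ^ (-a) *
        (|θ - φ| ^ 2 / 20 + (1 - v) * (cos (θ / 2) * cos (φ / 2))) ^ (-b)) := by
  have hr : 0 < |θ - φ| := abs_pos.2 (sub_ne_zero.2 hne)
  have hS := mul_nonneg (sub_nonneg.2 hu) (mul_nonneg (sin_half_nonneg hθ) (sin_half_nonneg hφ))
  have hC := mul_nonneg (sub_nonneg.2 hv) (mul_nonneg (cos_half_nonneg hθ) (cos_half_nonneg hφ))
  have hq := le_qf hθ hφ u v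
  have hr2 : 0 < |θ - φ| ^ 2 := pow_pos hr 2
  set D₁ := |θ - φ| ^ 2 / 20 + (1 - u) * (sin (θ / 2) * sin (φ / 2)) with hD₁
  set D₂ := |θ - φ| ^ 2 / 20 + (1 - v) * (cos (θ / 2) * cos (φ / 2)) with hD₂
  set X := t ^ 2 + qf θ φ u v with hX
  have ht2 := sq_nonneg t
  have hX0 : 0 < X := by linarith
  have h1 : X ^ (-(w / 2 + ε)) ≤ 40 ^ (w / 2 + ε) * (t + |θ - φ|) ^ (-(w + 2 * ε)) := by
    refine (rpow_le_rpow_of_nonpos (x := (t + |θ - φ|) ^ 2 / 40) (by positivity) ?_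
      (by linarith)).trans (le_of_eq ?_)
    · nlinarith [sq_nonneg (t - |θ - φ|)]
    · rw [sq_div_rpow (by positivity) (by norm_num)]
      congr 2
      ring
  have h2 : X ^ (-(s / 2)) ≤ 20 ^ (s / 2) * |θ - φ| ^ (-s) := by
    refine (rpow_le_rpow_of_nonpos (x := |θ - φ| ^ 2 / 20) (by positivity) (by linarith)
      (by linarith)).trans (le_of_eq ?_)
    rw [sq_div_rpow (by positivity) (by norm_num)]
    congr 2
    ring
  have h3 : X ^ (-a) ≤ D₁ ^ (-a) :=
    rpow_le_rpow_of_nonpos (by linarith) (by linarith) (by linarith)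
  have h4 : X ^ (-b) ≤ D₂ ^ (-b) :=
    rpow_le_rpow_of_nonpos (by linarith) (by linarith) (by linarith)
  have hsplit : X ^ (-n) = X ^ (-(w / 2 + ε)) * X ^ (-(s / 2)) * (X ^ (-a) * X ^ (-b)) := by
    rw [← rpow_add hX0, ← rpow_add hX0, ← rpow_add hX0, hn]
    congr 1
    ring
  rw [hsplit]
  gcongr

lemma enorm_integral_integral_le {μ ν : Measure ℝ} {f : ℝ → ℝ → ℝ} {A : ℝ} {F G : ℝ → ℝ}
    (hA : 0 ≤ A) (hF : ∀ᵐ u ∂μ, 0 ≤ F u) (hG : Measurable G)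
    (hf : ∀ᵐ v ∂ν, ∀ᵐ u ∂μ, 0 ≤ f u v ∧ f u v ≤ A * (F u * G v)) :
    ‖∫ v, (∫ u, f u v ∂μ) ∂ν‖ₑ ≤ ENNReal.ofReal A *
      ((∫⁻ u, ENNReal.ofReal (F u) ∂μ) * ∫⁻ v, ENNReal.ofReal (G v) ∂ν) := by
  refine (enorm_integral_le_lintegral_enorm _).trans ?_
  rw [← mul_assoc, ← lintegral_const_mul _ hG.ennreal_ofReal]
  refine lintegral_mono_ae ?_
  filter_upwards [hf] with v hv
  refine (enorm_integral_le_lintegral_enorm _).trans ?_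
  rw [← lintegral_const_mul' _ _ ENNReal.ofReal_ne_top,
    ← lintegral_mul_const' _ _ ENNReal.ofReal_ne_top]
  refine lintegral_mono_ae ?_
  filter_upwards [hv, hF] with u hu hu'
  rw [Real.enorm_of_nonneg hu.1, ← ENNReal.ofReal_mul hA,
    ← ENNReal.ofReal_mul (mul_nonneg hA hu'), mul_assoc]
  exact ENNReal.ofReal_le_ofReal hu.2

lemma exists_one_le_mul_rpow {α β ε s : ℝ} (hα : α < -(1 / 2)) (hβ : -(1 / 2) ≤ β)
    (hε : ε ≤ α + 1) (hs : 0 ≤ s) :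
    ∃ C : ℝ, 0 < C ∧ ∀ θ ∈ Icc (0 : ℝ) π, ∀ r ∈ Ioc (0 : ℝ) π,
      1 ≤ C * (r ^ (-s) * r ^ (-1 + 2 * ε) * (θ + r) ^ (-(2 * α + 1)) *
        (π - θ + r) ^ (-(2 * β + 1))) := by
  have hπ := pi_pos
  set e := -s + (-1 + 2 * ε) + -(2 * α + 1) with he
  refine ⟨(π ^ e * (2 * π) ^ (-(2 * β + 1)))⁻¹, by positivity, fun θ hθ r hr => ?_⟩
  obtain ⟨hr0, hr1⟩ := hr
  have hP : 0 < π - θ + r := by linarith [hθ.2]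
  rw [inv_mul_eq_div, one_le_div (by positivity)]
  have h1 : (2 * π) ^ (-(2 * β + 1)) ≤ (π - θ + r) ^ (-(2 * β + 1)) :=
    rpow_le_rpow_of_nonpos hP (by linarith [hθ.1]) (by linarith)
  have h2 : π ^ e ≤ r ^ (-s) * r ^ (-1 + 2 * ε) * (θ + r) ^ (-(2 * α + 1)) :=
    calc π ^ e ≤ r ^ e := rpow_le_rpow_of_nonpos hr0 hr1 (by linarith)
      _ = r ^ (-s) * r ^ (-1 + 2 * ε) * r ^ (-(2 * α + 1)) := by
        rw [← rpow_add hr0, ← rpow_add hr0]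
      _ ≤ _ := by
        gcongr
        · linarith
        · linarith [hθ.1]
  have hR : 0 < θ + r := by linarith [hθ.1]
  gcongr

theorem finbridge_low_alpha (α β : ℝ) (hα₁ : -1 < α) (hα₂ : α < -(1/2)) (hβ : -(1/2) ≤ β)
    (K k : ℕ) (hK : K ≤ 1) (hk : k ≤ 2)
    (W s : ℝ) (hW : 1 ≤ W) (hs : 0 ≤ s) (p : ℝ≥0∞) (hp : 1 ≤ p) :
    ∃ C : ℝ, 0 < C ∧ ∀ θ ∈ Icc (0 : ℝ) π, ∀ φ ∈ Icc (0 : ℝ) π, θ ≠ φ →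
      eLpNorm (fun t : ℝ =>
          1 + (Real.sin (θ/2) + Real.sin (φ/2)) ^ (K * k) *
            ∫ v, (∫ u,
                (t ^ 2 + qf θ φ u v) ^
                  (-(α + β + 3/2 + W / (2 * p.toReal) + (K * k : ℕ) / 2 + s / 2))
              ∂(piAux α K)) ∂(PiMeas β)) p
          ((volume.restrict (Ioo (0 : ℝ) 1)).withDensity
            (fun t => ENNReal.ofReal (t ^ (W - 1))))
        ≤ ENNReal.ofReal
            (C * |θ - φ| ^ (-s) / (muab α β (ballI θ |θ - φ|)).toReal) := by
  set ε := (α + 1) / 4 with hεdef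
  have hε : 0 < ε := by linarith
  have hW0 : 0 < W := by linarith
  set w := W / p.toReal with hw
  have hw0 : 0 ≤ w := by positivity
  obtain ⟨C₁, hC₁, hU⟩ :=
    exists_pow_mul_lintegral_piAux_le hα₂ hε (by linarith : 4 * ε ≤ α + 1) hK hk
  obtain ⟨C₂, hC₂, hV⟩ := exists_lintegral_PiMeas_rpow_le_mul hβ hε
  obtain ⟨C₃, hC₃, hT⟩ := exists_eLpNorm_add_rpow_le hW0 hε hp
  obtain ⟨C₄, hC₄, hm⟩ := exists_muab_ballI_le hα₁ hα₂ hβ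
  obtain ⟨C₅, hC₅, h1⟩ := exists_one_le_mul_rpow hα₂ hβ (by linarith : ε ≤ α + 1) hs
  have hπ := pi_pos
  set M := 40 ^ (w / 2 + ε) * 20 ^ (s / 2) * (C₁ * C₂) with hM
  set N := (1 + π) ^ (w + 2 * ε) * C₅ + M with hN
  have hM0 : 0 < M := by positivity
  have hN0 : 0 < N := by positivity
  refine ⟨N * C₃ * C₄, by positivity, fun θ hθ φ hφ hne => ?_⟩
  have hr : 0 < |θ - φ| := abs_pos.2 (sub_ne_zero.2 hne)
  have hrπ : |θ - φ| ≤ π := by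
    rw [abs_le]
    constructor <;> linarith [hθ.1, hθ.2, hφ.1, hφ.2]
  replace hU := hU θ hθ φ hφ hne
  have hP : 0 < π - θ + |θ - φ| := by linarith [hθ.2]
  have hR : 0 < θ + |θ - φ| := by linarith [hθ.1]
  replace hV := hV _ _ _ hr hP (mul_nonneg (cos_half_nonneg hθ) (cos_half_nonneg hφ))
    (sq_div_le_add_cos_mul_cos hθ hφ)
  replace hT := hT _ hr
  replace hm := hm θ hθ _ hr
  replace h1 := h1 θ hθ _ ⟨hr, hrπ⟩
  have hm0 := muab_ballI_ne_zero α β hθ hφ hne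
  have hmt : 0 < (muab α β (ballI θ |θ - φ|)).toReal :=
    ENNReal.toReal_pos hm0 (hm.trans_lt ENNReal.ofReal_lt_top).ne
  have hm' := ENNReal.toReal_le_of_le_ofReal (by positivity) hm
  have hSn : 0 ≤ (sin (θ / 2) + sin (φ / 2)) ^ (K * k) :=
    pow_nonneg (add_nonneg (sin_half_nonneg hθ) (sin_half_nonneg hφ)) _
  have hqf : ∀ u ≤ 1, ∀ v ≤ 1, 0 ≤ qf θ φ u v := fun u hu v hv => by
    have := le_qf hθ hφ u v
    have := mul_nonneg (sub_nonneg.2 hu) (mul_nonneg (sin_half_nonneg hθ) (sin_half_nonneg hφ))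
    have := mul_nonneg (sub_nonneg.2 hv) (mul_nonneg (cos_half_nonneg hθ) (cos_half_nonneg hφ))
    linarith [sq_nonneg |θ - φ|]
  set r := |θ - φ| with hrdef
  set L := r ^ (-s) * r ^ (-1 + 2 * ε) * (θ + r) ^ (-(2 * α + 1)) *
    (π - θ + r) ^ (-(2 * β + 1)) with hL
  have hL0 : 0 < L := by positivity
  have hpt : ∀ t ∈ Ioo (0 : ℝ) 1, ‖1 + (sin (θ / 2) + sin (φ / 2)) ^ (K * k) *
      ∫ v, (∫ u, (t ^ 2 + qf θ φ u v) ^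
        (-(α + β + 3/2 + W / (2 * p.toReal) + (K * k : ℕ) / 2 + s / 2)) ∂(piAux α K))
          ∂(PiMeas β)‖ₑ ≤ ‖(N * L) * (t + r) ^ (-(w + 2 * ε))‖ₑ := by
    intro t ht
    have ht0 := ht.1
    set A := 40 ^ (w / 2 + ε) * (t + r) ^ (-(w + 2 * ε)) * (20 ^ (s / 2) * r ^ (-s)) with hA
    have hint := enorm_integral_integral_le (μ := piAux α K) (ν := PiMeas β) (A := A)
      (f := fun u v => (t ^ 2 + qf θ φ u v) ^
        (-(α + β + 3/2 + W / (2 * p.toReal) + (K * k : ℕ) / 2 + s / 2)))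
      (F := fun u => (r ^ 2 / 20 + (1 - u) * (sin (θ / 2) * sin (φ / 2))) ^
          (-(α + 1 - 2 * ε + (K * k : ℕ) / 2)))
      (G := fun v => (r ^ 2 / 20 + (1 - v) * (cos (θ / 2) * cos (φ / 2))) ^
          (-(β + 1 / 2 + ε))) (by positivity)
      (by
        filter_upwards [ae_mem_Icc_piAux α K] with u hu
        have := mul_nonneg (sub_nonneg.2 hu.2) (mul_nonneg (sin_half_nonneg hθ) (sin_half_nonneg hφ))
        positivity)
      (by fun_prop)
      (by
        filter_upwards [ae_mem_Icc_PiMeas β] with v hv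
        filter_upwards [ae_mem_Icc_piAux α K] with u hu
        refine ⟨rpow_nonneg (add_nonneg (sq_nonneg t) (hqf u hu.2 v hv.2)) _,
          kernel_rpow_le ?_ (by linarith) hw0 hs hε.le ht0.le hθ hφ hne hu.2 hv.2 ?_⟩
        · have : (0 : ℝ) ≤ (K * k : ℕ) / 2 := by positivity
          linarith
        · have : W / (2 * p.toReal) = w / 2 := by rw [hw, div_div, mul_comm]
          rw [this]
          ring)
    have hone : (1 : ℝ) ≤ (1 + π) ^ (w + 2 * ε) * C₅ * L * (t + r) ^ (-(w + 2 * ε)) := by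
      have hx : 1 ≤ (1 + π) ^ (w + 2 * ε) * (t + r) ^ (-(w + 2 * ε)) := by
        rw [rpow_neg (by positivity), ← div_eq_mul_inv, one_le_div (by positivity)]
        exact rpow_le_rpow (by positivity) (by linarith [ht.2]) (by positivity)
      calc (1 : ℝ) ≤ ((1 + π) ^ (w + 2 * ε) * (t + r) ^ (-(w + 2 * ε))) * (C₅ * L) :=
            one_le_mul_of_one_le_of_one_le hx h1
        _ = _ := by ring
    refine (enorm_add_le _ _).trans ?_
    rw [enorm_mul, Real.enorm_of_nonneg hSn, Real.enorm_of_nonneg zero_le_one,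
      Real.enorm_of_nonneg (show 0 ≤ N * L * (t + r) ^ (-(w + 2 * ε)) by positivity)]
    calc _ ≤ ENNReal.ofReal ((1 + π) ^ (w + 2 * ε) * C₅ * L * (t + r) ^ (-(w + 2 * ε))) +
          ENNReal.ofReal A * (ENNReal.ofReal (C₁ * r ^ (-1 + 4 * ε) * (θ + r) ^ (-(2 * α + 1))) *
          ENNReal.ofReal (C₂ * r ^ (-(2 * ε)) * (π - θ + r) ^ (-(2 * β + 1)))) := by
          refine add_le_add (ENNReal.ofReal_le_ofReal hone) ?_
          refine (mul_le_mul_right hint _).trans ?_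
          rw [mul_left_comm, ← mul_assoc (ENNReal.ofReal (_ ^ (K * k)))]
          exact mul_le_mul_right (mul_le_mul' hU hV) _
      _ = _ := by
          rw [← ENNReal.ofReal_mul (by positivity), ← ENNReal.ofReal_mul (by positivity),
            ← ENNReal.ofReal_add (by positivity) (by positivity)]
          congr 1
          have : r ^ (-1 + 2 * ε) = r ^ (-1 + 4 * ε) * r ^ (-(2 * ε)) := by
            rw [← rpow_add hr]
            congr 1
            ring
          rw [hN, hM, hA, hL, this]
          ring
  have hmem : ∀ᵐ t ∂(volume.restrict (Ioo (0 : ℝ) 1)).withDensity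
      (fun t => ENNReal.ofReal (t ^ (W - 1))), t ∈ Ioo (0 : ℝ) 1 :=
    (withDensity_absolutelyContinuous _ _).ae_le (ae_restrict_mem measurableSet_Ioo)
  calc _ ≤ eLpNorm ((N * L) • fun t : ℝ => (t + r) ^ (-(w + 2 * ε))) p
        ((volume.restrict (Ioo (0 : ℝ) 1)).withDensity
          (fun t => ENNReal.ofReal (t ^ (W - 1)))) :=
        eLpNorm_mono_enorm_ae (hmem.mono hpt)
    _ ≤ ENNReal.ofReal (N * L) * ENNReal.ofReal (C₃ * r ^ (-(2 * ε))) := by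
        rw [eLpNorm_const_smul, Real.enorm_of_nonneg (by positivity)]
        gcongr
    _ ≤ _ := by
        rw [← ENNReal.ofReal_mul (by positivity)]
        refine ENNReal.ofReal_le_ofReal ?_
        rw [le_div_iff₀ hmt]
        refine (mul_le_mul_of_nonneg_left hm' (by positivity)).trans (le_of_eq ?_)
        have e1 : r ^ (-1 + 2 * ε) = r⁻¹ * r ^ (2 * ε) := by rw [rpow_add hr, rpow_neg_one]
        rw [hL, e1, rpow_neg hr.le (2 * ε), rpow_neg hR.le, rpow_neg hP.le]
        field_simp
end

section
/- Let α, β > -1. Then there exist constants 0 < c ≤ C (depending only on α and β) such that for all 0 < t ≤ 1 and all θ, φ ∈ [0,π]: c · E ≤ 𝓗_t^{α,β}(θ,φ) ≤ C · E, where E := (t² + θ² + φ²)^{-α-1/2} (t² + (π−θ)² + (π−φ)²)^{-β-1/2} · t/(t² + (θ−φ)²). -/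
open MeasureTheory Real Set
open scoped ENNReal Classical

open Asymptotics Filter Topology

section Pochhammer

lemma ascPochhammer_eval_eq_prod (x : ℝ) (n : ℕ) :
    (ascPochhammer ℝ n).eval x = ∏ j ∈ Finset.range n, (x + j) := by
  induction n with
  | zero => simp
  | succ n ih => rw [ascPochhammer_succ_eval, ih, Finset.prod_range_succ]

lemma ascPochhammer_eval_pos {x : ℝ} (hx : 0 < x) (n : ℕ) :
    0 < (ascPochhammer ℝ n).eval x := by
  rw [ascPochhammer_eval_eq_prod]
  exact Finset.prod_pos fun j _ => by positivity

lemma isTheta_top_of_isTheta_atTop {f g : ℕ → ℝ} (hf : ∀ n, 0 < f n) (hg : ∀ n, 0 < g n)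
    (h : f =Θ[atTop] g) : f =Θ[⊤] g :=
  ⟨h.1.nat_of_atTop (Eventually.of_forall fun n hn => absurd hn (hg n).ne'),
    h.2.nat_of_atTop (Eventually.of_forall fun n hn => absurd hn (hf n).ne')⟩

/-- Growth of the rising factorial: `(x)_n ≍ n! (n+1)^(x-1)`. -/
lemma isTheta_ascPochhammer {x : ℝ} (hx : 0 < x) :
    (fun n : ℕ => (ascPochhammer ℝ n).eval x) =Θ[⊤]
      fun n : ℕ => (n.factorial : ℝ) * (n + 1 : ℝ) ^ (x - 1) := by
  apply isTheta_top_of_isTheta_atTop (fun n => ascPochhammer_eval_pos hx n)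
    (fun n => by positivity)
  have hlim : Tendsto (fun n : ℕ => (n.factorial * (n + 1 : ℝ) ^ (x - 1)) /
      (ascPochhammer ℝ n).eval x) atTop (𝓝 (Real.Gamma x * 1)) := by
    have h1 : Tendsto (fun n : ℕ => ((n : ℝ) / (n + 1)) ^ (-x) * ((n + x) / (n + 1)))
        atTop (𝓝 1) := by
      have h2 : Tendsto (fun n : ℕ => (n : ℝ) / (n + 1)) atTop (𝓝 1) :=
        tendsto_natCast_div_add_atTop 1
      have h3 : Tendsto (fun n : ℕ => 1 / ((n : ℝ) + 1)) atTop (𝓝 0) :=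
        tendsto_one_div_add_atTop_nhds_zero_nat
      have h5 := (h2.rpow_const (p := -x) (Or.inl one_ne_zero)).mul
        (h2.add (h3.const_mul x))
      simpa [div_eq_mul_inv, add_mul] using h5
    refine ((Real.GammaSeq_tendsto_Gamma x).mul h1).congr' ?_
    filter_upwards [eventually_gt_atTop 0] with n hn
    have hn' : (0 : ℝ) < n := by exact_mod_cast hn
    have hp := ascPochhammer_eval_pos hx n
    rw [Real.GammaSeq, ← ascPochhammer_eval_eq_prod, ascPochhammer_succ_eval,
      Real.div_rpow hn'.le (by positivity), Real.rpow_neg hn'.le, Real.rpow_neg (by positivity),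
      Real.rpow_sub (by positivity), Real.rpow_one]
    have := Real.rpow_pos_of_pos hn' x
    have : (0:ℝ) < (n + 1 : ℝ) ^ x := by positivity
    field_simp
    ring
  exact isTheta_of_div_tendsto_nhds_ne_zero hlim
    (by simpa using (Real.Gamma_pos_of_pos hx).ne')

lemma hasSum_ascPochhammer_div_factorial (s : ℝ) {r : ℝ} (h0 : 0 ≤ r) (h1 : r < 1) :
    HasSum (fun n : ℕ => (ascPochhammer ℝ n).eval s / n.factorial * r ^ n) ((1 - r) ^ (-s)) := by
  have h := (Real.one_div_one_sub_rpow_hasFPowerSeriesOnBall_zero s).hasSum (y := r) (by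
    simpa [enorm_eq_nnnorm, ← NNReal.coe_lt_coe, abs_of_nonneg h0] using h1)
  simp only [FormalMultilinearSeries.ofScalars_apply_eq, smul_eq_mul, zero_add, one_div] at h
  rw [Real.rpow_neg (by linarith)]
  refine h.congr_fun fun n => ?_
  have h2 := Ring.factorial_nsmul_multichoose_eq_ascPochhammer s n
  rw [Polynomial.ascPochhammer_smeval_eq_eval, nsmul_eq_mul] at h2
  have h3 : Ring.choose (s + n - 1) n = Ring.multichoose s n := by
    simp only [Ring.choose]; congr 1; ring
  rw [h3, ← h2]
  field_simp

end Pochhammer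

section BinomialSums

/-- The monomial `binom(k+l, k) X^k Y^l` indexed by `p = (k, l)`. -/
noncomputable def binomMonomial (X Y : ℝ) (p : ℕ × ℕ) : ℝ :=
  ((p.1 + p.2).choose p.1 : ℝ) * X ^ p.1 * Y ^ p.2

/-- The power weight `(k+l+1)^(s-1) (k+1)^A (l+1)^B` indexed by `p = (k, l)`. -/
noncomputable def powerWeight (s A B : ℝ) (p : ℕ × ℕ) : ℝ :=
  (p.1 + p.2 + 1 : ℝ) ^ (s - 1) * (p.1 + 1 : ℝ) ^ A * (p.2 + 1 : ℝ) ^ B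

/-- The size of `∑ binomMonomial X Y p * powerWeight s A B p`. -/
noncomputable def sumProfile (s A B X Y : ℝ) : ℝ :=
  (1 - X - Y) ^ (-(s + A + B)) * (1 - Y) ^ A * (1 - X) ^ B

/-- The weighted binomial sum is dominated by its profile, uniformly in `X` and `Y`. -/
def ProfileDominates (s A B : ℝ) : Prop :=
  ∃ C : ℝ, 0 < C ∧ ∀ X Y : ℝ, 0 ≤ X → 0 ≤ Y → X + Y < 1 →
    Summable (fun p => binomMonomial X Y p * powerWeight s A B p) ∧
    ∑' p, binomMonomial X Y p * powerWeight s A B p ≤ C * sumProfile s A B X Y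

lemma binomMonomial_nonneg {X Y : ℝ} (hX : 0 ≤ X) (hY : 0 ≤ Y) (p : ℕ × ℕ) :
    0 ≤ binomMonomial X Y p := by
  unfold binomMonomial; positivity

lemma powerWeight_pos (s A B : ℝ) (p : ℕ × ℕ) : 0 < powerWeight s A B p := by
  unfold powerWeight; positivity

lemma sumProfile_pos (s A B : ℝ) {X Y : ℝ} (hX : 0 ≤ X) (hY : 0 ≤ Y) (h : X + Y < 1) :
    0 < sumProfile s A B X Y := by
  have h1 : 0 < 1 - X - Y := by linarith
  have h2 : 0 < 1 - X := by linarith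
  have h3 : 0 < 1 - Y := by linarith
  unfold sumProfile; positivity

lemma summable_and_tsum_le_of_le {ι : Type*} {f g : ι → ℝ} {M : ℝ} (hf : ∀ i, 0 ≤ f i)
    (hfg : ∀ i, f i ≤ g i) (hg : Summable g) (hM : ∑' i, g i ≤ M) :
    Summable f ∧ ∑' i, f i ≤ M :=
  have hs := Summable.of_nonneg_of_le hf hfg hg
  ⟨hs, (hs.tsum_le_tsum hfg hg).trans hM⟩

lemma rpow_le_two_rpow_abs_mul {x y : ℝ} (hx : 0 < x) (hy : 0 < y) (hxy : x ≤ 2 * y)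
    (hyx : y ≤ 2 * x) (e : ℝ) : x ^ e ≤ 2 ^ |e| * y ^ e := by
  rcases le_total 0 e with he | he
  · rw [abs_of_nonneg he, ← Real.mul_rpow (by norm_num) hy.le]
    exact Real.rpow_le_rpow hx.le hxy he
  · rw [abs_of_nonpos he, Real.rpow_neg (by norm_num), ← Real.inv_rpow (by norm_num),
      ← Real.mul_rpow (by norm_num) hy.le]
    exact Real.rpow_le_rpow_of_nonpos (by positivity) (by linarith) he

lemma succ_mul_binomMonomial_succ (X Y : ℝ) (k l : ℕ) :
    (k + 1 : ℝ) * binomMonomial X Y (k + 1, l) =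
      X * ((k + l + 1 : ℝ) * binomMonomial X Y (k, l)) := by
  have h : ((k + l + 1 : ℕ) : ℝ) * ((k + l).choose k : ℝ) =
      ((k + l + 1).choose (k + 1) : ℝ) * ((k + 1 : ℕ) : ℝ) := by
    exact_mod_cast Nat.add_one_mul_choose_eq (k + l) k
  push_cast at h
  simp only [binomMonomial]
  rw [show k + 1 + l = k + l + 1 by ring, pow_succ]
  linear_combination (-(X ^ k * X * Y ^ l)) * h

lemma ProfileDominates.add_one {s A B : ℝ} (h0 : ProfileDominates s A B)
    (h1 : ProfileDominates (s + 1) A B) : ProfileDominates s (A + 1) B := by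
  obtain ⟨C0, hC0, H0⟩ := h0
  obtain ⟨C1, hC1, H1⟩ := h1
  set D : ℝ := 2 ^ |s - 1| * 2 ^ |A| with hD
  have hDpos : 0 < D := by positivity
  refine ⟨C0 + D * C1, by positivity, fun X Y hX hY hXY => ?_⟩
  obtain ⟨S0, T0⟩ := H0 X Y hX hY hXY
  obtain ⟨S1, T1⟩ := H1 X Y hX hY hXY
  have hδ : 0 < 1 - X - Y := by linarith
  have hY1 : 0 < 1 - Y := by linarith
  set f : ℕ × ℕ → ℝ := fun p => p.1 * (binomMonomial X Y p * powerWeight s A B p) with hf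
  set e : ℕ × ℕ → ℕ × ℕ := fun p => (p.1 + 1, p.2) with he
  have hinj : Function.Injective e := by
    rintro ⟨a, b⟩ ⟨c, d⟩ h
    simpa [he] using h
  have hf0 : ∀ p, 0 ≤ f p := fun p =>
    mul_nonneg (by positivity)
      (mul_nonneg (binomMonomial_nonneg hX hY p) (powerWeight_pos s A B p).le)
  have hrange : ∀ p ∉ Set.range e, f p = 0 := by
    rintro ⟨k, l⟩ hp
    rcases k with _ | k
    · simp [hf]
    · exact absurd ⟨(k, l), rfl⟩ hp
  have hle : ∀ p, (f ∘ e) p ≤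
      D * X * (binomMonomial X Y p * powerWeight (s + 1) A B p) := by
    rintro ⟨k, l⟩
    have e1 : (f ∘ e) (k, l) = X * ((k + l + 1 : ℝ) * binomMonomial X Y (k, l)) *
        powerWeight s A B (k + 1, l) := by
      rw [← succ_mul_binomMonomial_succ]; simp [hf, he, mul_assoc]
    have e2 : powerWeight (s + 1) A B (k, l) = (k + l + 1 : ℝ) *
        ((k + l + 1 : ℝ) ^ (s - 1) * (k + 1 : ℝ) ^ A * (l + 1 : ℝ) ^ B) := by
      simp only [powerWeight]
      rw [show s + 1 - 1 = 1 + (s - 1) by ring, Real.rpow_add (by positivity), Real.rpow_one]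
      ring
    have e3 : powerWeight s A B (k + 1, l) ≤
        D * ((k + l + 1 : ℝ) ^ (s - 1) * (k + 1 : ℝ) ^ A * (l + 1 : ℝ) ^ B) := by
      have i1 := rpow_le_two_rpow_abs_mul (x := (k + 1 + l + 1 : ℝ)) (y := k + l + 1)
        (by positivity) (by positivity) (by linarith [(k.cast_nonneg : (0:ℝ) ≤ k),
          (l.cast_nonneg : (0:ℝ) ≤ l)]) (by linarith [(k.cast_nonneg : (0:ℝ) ≤ k),
          (l.cast_nonneg : (0:ℝ) ≤ l)]) (s - 1)
      have i2 := rpow_le_two_rpow_abs_mul (x := (k + 1 + 1 : ℝ)) (y := k + 1)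
        (by positivity) (by positivity) (by linarith [(k.cast_nonneg : (0:ℝ) ≤ k)])
        (by linarith [(k.cast_nonneg : (0:ℝ) ≤ k)]) A
      simp only [powerWeight, hD]
      push_cast
      calc _ ≤ (2 ^ |s - 1| * (k + l + 1 : ℝ) ^ (s - 1)) * (2 ^ |A| * (k + 1 : ℝ) ^ A) *
            (l + 1 : ℝ) ^ B := by gcongr
        _ = _ := by ring
    rw [e1, e2]
    calc _ ≤ X * ((k + l + 1 : ℝ) * binomMonomial X Y (k, l)) *
          (D * ((k + l + 1 : ℝ) ^ (s - 1) * (k + 1 : ℝ) ^ A * (l + 1 : ℝ) ^ B)) := by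
            have := binomMonomial_nonneg hX hY (k, l)
            gcongr
      _ = _ := by ring
  obtain ⟨Sfe, Tfe⟩ := summable_and_tsum_le_of_le (fun p => hf0 (e p)) hle (S1.mul_left _)
    (tsum_mul_left (a := D * X) (f := fun p => binomMonomial X Y p * powerWeight (s + 1) A B p)).le
  have Sf : Summable f := (hinj.summable_iff hrange).1 Sfe
  have Tf : ∑' p, f p = ∑' p, (f ∘ e) p :=
    (hinj.tsum_eq (f := f) (fun p hp => by by_contra h; exact hp (hrange p h))).symm
  have hsum : (fun p => binomMonomial X Y p * powerWeight s (A + 1) B p) =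
      fun p => binomMonomial X Y p * powerWeight s A B p + f p := by
    funext p
    simp only [hf, powerWeight]
    rw [Real.rpow_add (by positivity), Real.rpow_one]
    ring
  have hprof1 : sumProfile (s + 1) A B X Y * (1 - X - Y) = sumProfile s A B X Y := by
    simp only [sumProfile]
    rw [show -(s + A + B) = -(s + 1 + A + B) + 1 by ring, Real.rpow_add hδ, Real.rpow_one]
    ring
  have hprof2 : sumProfile s (A + 1) B X Y =
      sumProfile s A B X Y + X * sumProfile (s + 1) A B X Y := by
    rw [← hprof1]
    simp only [sumProfile]
    rw [show s + (A + 1) + B = s + 1 + A + B by ring, Real.rpow_add hY1, Real.rpow_one]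
    ring
  have p0 := sumProfile_pos s A B hX hY hXY
  have p1 := sumProfile_pos (s + 1) A B hX hY hXY
  rw [hsum]
  refine ⟨S0.add Sf, ?_⟩
  rw [S0.tsum_add Sf, Tf, hprof2]
  simp only [Function.comp]
  have hDX : 0 ≤ D * X := by positivity
  have := mul_le_mul_of_nonneg_left T1 hDX
  have q1 : 0 ≤ C0 * (X * sumProfile (s + 1) A B X Y) := by positivity
  have q2 : 0 ≤ D * C1 * sumProfile s A B X Y := by positivity
  nlinarith

lemma ProfileDominates.sub_one {s A B : ℝ} (h0 : ProfileDominates s A B)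
    (h1 : ProfileDominates (s - 1) A B) : ProfileDominates s (A - 1) B := by
  obtain ⟨C0, hC0, H0⟩ := h0
  obtain ⟨C1, hC1, H1⟩ := h1
  set D : ℝ := 2 ^ |s - 2| * 2 ^ |A| with hD
  have hDpos : 0 < D := by positivity
  refine ⟨C0 + D * C1, by positivity, fun X Y hX hY hXY => ?_⟩
  obtain ⟨S0, T0⟩ := H0 X Y hX hY hXY
  obtain ⟨S1, T1⟩ := H1 X Y hX hY hXY
  have hδ : 0 < 1 - X - Y := by linarith
  have hY1 : 0 < 1 - Y := by linarith
  set e : ℕ × ℕ → ℕ × ℕ := fun p => (p.1 + 1, p.2) with he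
  have hinj : Function.Injective e := by
    rintro ⟨a, b⟩ ⟨c, d⟩ h
    simpa [he] using h
  have hnn : ∀ s A B p, 0 ≤ binomMonomial X Y p * powerWeight s A B p := fun s A B p =>
    mul_nonneg (binomMonomial_nonneg hX hY p) (powerWeight_pos s A B p).le
  have hle0 : ∀ p, binomMonomial X Y p * powerWeight s (A - 1) B p ≤
      binomMonomial X Y p * powerWeight s A B p := by
    intro p
    refine mul_le_mul_of_nonneg_left ?_ (binomMonomial_nonneg hX hY p)
    simp only [powerWeight]
    have : (p.1 + 1 : ℝ) ^ (A - 1) ≤ (p.1 + 1 : ℝ) ^ A :=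
      Real.rpow_le_rpow_of_exponent_le (by simp) (by linarith)
    gcongr
  obtain ⟨S, T⟩ := summable_and_tsum_le_of_le (hnn _ _ _) hle0 S0 T0
  have hle : ∀ p, X * (binomMonomial X Y p * powerWeight s (A - 1) B p) ≤
      D * ((fun p => binomMonomial X Y p * powerWeight (s - 1) A B p) ∘ e) p := by
    rintro ⟨k, l⟩
    have e1 : X * (binomMonomial X Y (k, l) * powerWeight s (A - 1) B (k, l)) =
        binomMonomial X Y (k + 1, l) *
        ((k + l + 1 : ℝ) ^ (s - 2) * (k + 1 : ℝ) ^ A * (l + 1 : ℝ) ^ B) := by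
      have h := succ_mul_binomMonomial_succ X Y k l
      simp only [powerWeight]
      rw [show s - 1 = s - 2 + 1 by ring, Real.rpow_add (by positivity), Real.rpow_one,
        Real.rpow_sub_one (by positivity)]
      field_simp
      linear_combination (-1 : ℝ) * h
    have e3 : (k + l + 1 : ℝ) ^ (s - 2) * (k + 1 : ℝ) ^ A * (l + 1 : ℝ) ^ B ≤
        D * powerWeight (s - 1) A B (k + 1, l) := by
      have i1 := rpow_le_two_rpow_abs_mul (y := (k + 1 + l + 1 : ℝ)) (x := k + l + 1)
        (by positivity) (by positivity) (by linarith [(k.cast_nonneg : (0:ℝ) ≤ k),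
          (l.cast_nonneg : (0:ℝ) ≤ l)]) (by linarith [(k.cast_nonneg : (0:ℝ) ≤ k),
          (l.cast_nonneg : (0:ℝ) ≤ l)]) (s - 2)
      have i2 := rpow_le_two_rpow_abs_mul (y := (k + 1 + 1 : ℝ)) (x := k + 1)
        (by positivity) (by positivity) (by linarith [(k.cast_nonneg : (0:ℝ) ≤ k)])
        (by linarith [(k.cast_nonneg : (0:ℝ) ≤ k)]) A
      simp only [powerWeight, hD]
      push_cast
      rw [show s - 1 - 1 = s - 2 by ring]
      calc _ ≤ (2 ^ |s - 2| * (k + 1 + l + 1 : ℝ) ^ (s - 2)) * (2 ^ |A| * (k + 1 + 1 : ℝ) ^ A) *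
            (l + 1 : ℝ) ^ B := by gcongr
        _ = _ := by ring
    rw [e1]
    calc _ ≤ binomMonomial X Y (k + 1, l) * (D * powerWeight (s - 1) A B (k + 1, l)) :=
          mul_le_mul_of_nonneg_left e3 (binomMonomial_nonneg hX hY _)
      _ = _ := by simp only [Function.comp, he]; ring
  have hXT : X * ∑' p, binomMonomial X Y p * powerWeight s (A - 1) B p ≤
      D * (C1 * sumProfile (s - 1) A B X Y) := by
    rw [← tsum_mul_left]
    refine ((S.mul_left X).tsum_le_tsum hle ((S1.comp_injective hinj).mul_left D)).trans ?_
    rw [tsum_mul_left]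
    exact mul_le_mul_of_nonneg_left
      ((tsum_comp_le_tsum_of_inj S1 (hnn _ _ _) hinj).trans T1) hDpos.le
  refine ⟨S, ?_⟩
  have hprof1 : sumProfile (s - 1) A B X Y = sumProfile s (A - 1) B X Y * (1 - Y) := by
    simp only [sumProfile]
    rw [show s + (A - 1) + B = s - 1 + A + B by ring, Real.rpow_sub hY1, Real.rpow_one]
    field_simp
  have hprof2 : (1 - X - Y) * sumProfile s A B X Y = sumProfile s (A - 1) B X Y * (1 - Y) := by
    simp only [sumProfile]
    rw [show -(s + (A - 1) + B) = -(s + A + B) + 1 by ring, Real.rpow_add hδ, Real.rpow_sub hY1,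
      Real.rpow_one, Real.rpow_one]
    field_simp
  have hδT := mul_le_mul_of_nonneg_left T hδ.le
  rw [mul_left_comm, hprof2] at hδT
  rw [hprof1] at hXT
  refine le_of_mul_le_mul_right (a := 1 - Y) ?_ hY1
  linarith

lemma ProfileDominates.swap {s A B : ℝ} (h : ProfileDominates s A B) :
    ProfileDominates s B A := by
  obtain ⟨C, hC, H⟩ := h
  refine ⟨C, hC, fun X Y hX hY hXY => ?_⟩
  obtain ⟨S, T⟩ := H Y X hY hX (by linarith)
  have hfun : (fun p => binomMonomial X Y p * powerWeight s B A p) =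
      (fun p => binomMonomial Y X p * powerWeight s A B p) ∘ Equiv.prodComm ℕ ℕ := by
    funext ⟨k, l⟩
    have hch : (k + l).choose k = (l + k).choose l := by
      rw [add_comm l k, Nat.choose_symm_add]
    simp only [binomMonomial, powerWeight, Function.comp, Equiv.prodComm_apply, Prod.swap, hch]
    rw [add_comm (k : ℝ) l]
    ring
  have hprof : sumProfile s B A X Y = sumProfile s A B Y X := by
    simp only [sumProfile]
    rw [show s + B + A = s + A + B by ring, sub_right_comm]
    ring
  rw [hfun, hprof]
  exact ⟨(Equiv.summable_iff _).2 S, ((Equiv.prodComm ℕ ℕ).tsum_eq _).trans_le T⟩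

lemma powerWeight_interpolate (s₀ s₁ A₀ A₁ B₀ B₁ u v : ℝ) (huv : u + v = 1) (p : ℕ × ℕ) :
    powerWeight (u * s₀ + v * s₁) (u * A₀ + v * A₁) (u * B₀ + v * B₁) p =
      powerWeight s₀ A₀ B₀ p ^ u * powerWeight s₁ A₁ B₁ p ^ v := by
  have key : ∀ x : ℝ, 0 < x → ∀ a b : ℝ, x ^ (u * a + v * b) = (x ^ a) ^ u * (x ^ b) ^ v := by
    intro x hx a b
    rw [← Real.rpow_mul hx.le, ← Real.rpow_mul hx.le, ← Real.rpow_add hx]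
    ring_nf
  simp only [powerWeight]
  rw [Real.mul_rpow (by positivity) (by positivity), Real.mul_rpow (by positivity) (by positivity),
    Real.mul_rpow (by positivity) (by positivity), Real.mul_rpow (by positivity) (by positivity),
    show u * s₀ + v * s₁ - 1 = u * (s₀ - 1) + v * (s₁ - 1) by linear_combination huv,
    key _ (by positivity), key _ (by positivity), key _ (by positivity)]
  ring

lemma sumProfile_interpolate (s₀ s₁ A₀ A₁ B₀ B₁ u v : ℝ) {X Y : ℝ}
    (hX : 0 ≤ X) (hY : 0 ≤ Y) (hXY : X + Y < 1) :
    sumProfile (u * s₀ + v * s₁) (u * A₀ + v * A₁) (u * B₀ + v * B₁) X Y =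
      sumProfile s₀ A₀ B₀ X Y ^ u * sumProfile s₁ A₁ B₁ X Y ^ v := by
  have key : ∀ x : ℝ, 0 < x → ∀ a b : ℝ, x ^ (u * a + v * b) = (x ^ a) ^ u * (x ^ b) ^ v := by
    intro x hx a b
    rw [← Real.rpow_mul hx.le, ← Real.rpow_mul hx.le, ← Real.rpow_add hx]
    ring_nf
  have h1 : 0 < 1 - X - Y := by linarith
  have h2 : 0 < 1 - X := by linarith
  have h3 : 0 < 1 - Y := by linarith
  simp only [sumProfile]
  rw [Real.mul_rpow (by positivity) (by positivity), Real.mul_rpow (by positivity) (by positivity),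
    Real.mul_rpow (by positivity) (by positivity), Real.mul_rpow (by positivity) (by positivity),
    show -(u * s₀ + v * s₁ + (u * A₀ + v * A₁) + (u * B₀ + v * B₁)) =
      u * (-(s₀ + A₀ + B₀)) + v * (-(s₁ + A₁ + B₁)) by ring,
    key _ h1, key _ h2, key _ h3]
  ring

lemma ProfileDominates.interpolate {s₀ s₁ A₀ A₁ B₀ B₁ u v : ℝ}
    (h0 : ProfileDominates s₀ A₀ B₀) (h1 : ProfileDominates s₁ A₁ B₁)
    (hu : 0 ≤ u) (hv : 0 ≤ v) (huv : u + v = 1) :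
    ProfileDominates (u * s₀ + v * s₁) (u * A₀ + v * A₁) (u * B₀ + v * B₁) := by
  obtain ⟨C0, hC0, H0⟩ := h0
  obtain ⟨C1, hC1, H1⟩ := h1
  refine ⟨u * C0 + v * C1, ?_, fun X Y hX hY hXY => ?_⟩
  · rcases hu.eq_or_lt with rfl | hu
    · have : v = 1 := by linarith
      subst this; simpa using hC1
    · positivity
  obtain ⟨S0, T0⟩ := H0 X Y hX hY hXY
  obtain ⟨S1, T1⟩ := H1 X Y hX hY hXY
  have p0 := sumProfile_pos s₀ A₀ B₀ hX hY hXY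
  have p1 := sumProfile_pos s₁ A₁ B₁ hX hY hXY
  set P0 := sumProfile s₀ A₀ B₀ X Y
  set P1 := sumProfile s₁ A₁ B₁ X Y
  have hP : sumProfile (u * s₀ + v * s₁) (u * A₀ + v * A₁) (u * B₀ + v * B₁) X Y =
      P0 ^ u * P1 ^ v := sumProfile_interpolate _ _ _ _ _ _ _ _ hX hY hXY
  set P := P0 ^ u * P1 ^ v with hPdef
  have hPpos : 0 < P := by positivity
  refine summable_and_tsum_le_of_le
    (g := fun p => P * (u / P0) * (binomMonomial X Y p * powerWeight s₀ A₀ B₀ p) +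
      P * (v / P1) * (binomMonomial X Y p * powerWeight s₁ A₁ B₁ p))
    (fun p => mul_nonneg (binomMonomial_nonneg hX hY p) (powerWeight_pos _ _ _ p).le)
    (fun p => ?_) ((S0.mul_left _).add (S1.mul_left _)) ?_
  · have w0 := powerWeight_pos s₀ A₀ B₀ p
    have w1 := powerWeight_pos s₁ A₁ B₁ p
    rw [powerWeight_interpolate _ _ _ _ _ _ _ _ huv]
    have hm := Real.geom_mean_le_arith_mean2_weighted hu hv (div_pos w0 p0).le
      (div_pos w1 p1).le huv
    rw [Real.div_rpow w0.le p0.le, Real.div_rpow w1.le p1.le, div_mul_div_comm, ← hPdef,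
      div_le_iff₀ hPpos] at hm
    calc _ ≤ binomMonomial X Y p * ((u * (powerWeight s₀ A₀ B₀ p / P0) +
          v * (powerWeight s₁ A₁ B₁ p / P1)) * P) :=
          mul_le_mul_of_nonneg_left hm (binomMonomial_nonneg hX hY p)
      _ = _ := by ring
  · rw [(S0.mul_left _).tsum_add (S1.mul_left _), tsum_mul_left, tsum_mul_left, hP]
    calc _ ≤ P * (u / P0) * (C0 * P0) + P * (v / P1) * (C1 * P1) := by gcongr
      _ = _ := by field_simp

end BinomialSums

section EvenSums

lemma hasSum_of_hasSum_antidiagonal {f : ℕ × ℕ → ℝ} (hf : ∀ p, 0 ≤ f p) {a : ℝ}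
    (h : HasSum (fun n => ∑ p ∈ Finset.HasAntidiagonal.antidiagonal n, f p) a) : HasSum f a := by
  rw [← Finset.HasAntidiagonal.sigmaAntidiagonalEquivProd.hasSum_iff]
  have hfib : ∀ n : ℕ, HasSum (fun p : Finset.HasAntidiagonal.antidiagonal n => f p)
      (∑ p ∈ Finset.HasAntidiagonal.antidiagonal n, f p) := fun n => by
    rw [← Finset.sum_coe_sort]
    exact hasSum_fintype _
  refine HasSum.sigma_of_hasSum h hfib ((summable_sigma_of_nonneg fun x => hf _).2
    ⟨fun n => (hfib n).summable, ?_⟩)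
  exact h.summable.congr fun n => (hfib n).tsum_eq.symm

lemma hasSum_antidiagonal {f : ℕ × ℕ → ℝ} (h : Summable f) :
    HasSum (fun n => ∑ p ∈ Finset.HasAntidiagonal.antidiagonal n, f p) (∑' p, f p) := by
  refine ((Finset.HasAntidiagonal.sigmaAntidiagonalEquivProd.hasSum_iff).2 h.hasSum).sigma
    fun n => ?_
  rw [← Finset.sum_coe_sort]
  exact hasSum_fintype _

lemma sum_antidiagonal_binomMonomial (X Y : ℝ) (n : ℕ) :
    ∑ p ∈ Finset.HasAntidiagonal.antidiagonal n, binomMonomial X Y p = (X + Y) ^ n := by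
  rw [(Commute.all X Y).add_pow']
  refine Finset.sum_congr rfl fun p hp => ?_
  rw [Finset.HasAntidiagonal.mem_antidiagonal] at hp
  simp [binomMonomial, hp, mul_assoc]

lemma sum_range_two_mul_add_one {M : Type*} [AddCommMonoid M] (f : ℕ → M) (n : ℕ) :
    ∑ j ∈ Finset.range (2 * n + 1), f j =
      ∑ m ∈ Finset.range (n + 1), f (2 * m) + ∑ m ∈ Finset.range n, f (2 * m + 1) := by
  induction n with
  | zero => simp
  | succ n ih =>
    rw [show 2 * (n + 1) + 1 = 2 * n + 1 + 1 + 1 by ring, Finset.sum_range_succ,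
      Finset.sum_range_succ, ih, Finset.sum_range_succ (fun m => f (2 * m)) (n + 1),
      Finset.sum_range_succ (fun m => f (2 * m + 1)) n, mul_add_one]
    abel

lemma sum_antidiagonal_two_mul_binomMonomial (X Y : ℝ) (n : ℕ) :
    ∑ p ∈ Finset.HasAntidiagonal.antidiagonal n, binomMonomial X Y (2 * p.1, 2 * p.2) =
      ((X + Y) ^ (2 * n) + (-X + Y) ^ (2 * n)) / 2 := by
  rw [← sum_antidiagonal_binomMonomial, ← sum_antidiagonal_binomMonomial,
    Finset.Nat.sum_antidiagonal_eq_sum_range_succ_mk,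
    Finset.Nat.sum_antidiagonal_eq_sum_range_succ_mk,
    Finset.Nat.sum_antidiagonal_eq_sum_range_succ_mk,
    sum_range_two_mul_add_one, sum_range_two_mul_add_one]
  have h1 : ∀ m l, binomMonomial (-X) Y (2 * m, l) = binomMonomial X Y (2 * m, l) := by
    intro m l; simp [binomMonomial, pow_mul]
  have h2 : ∀ m l, binomMonomial (-X) Y (2 * m + 1, l) = -binomMonomial X Y (2 * m + 1, l) := by
    intro m l; simp [binomMonomial, pow_succ, pow_mul]
  simp only [h1, h2, Finset.sum_neg_distrib, Nat.mul_sub]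
  ring

lemma profileDominates_zero_zero {s : ℝ} (hs : 0 < s) : ProfileDominates s 0 0 := by
  obtain ⟨c, hc, H⟩ := (isTheta_ascPochhammer hs).2.exists_pos
  rw [IsBigOWith_def, eventually_top] at H
  refine ⟨c, hc, fun X Y hX hY hXY => ?_⟩
  have hb : ∀ n : ℕ, (n + 1 : ℝ) ^ (s - 1) ≤
      c * ((ascPochhammer ℝ n).eval s / n.factorial) := by
    intro n
    have h := H n
    have hf : (0 : ℝ) < n.factorial := by positivity
    rw [Real.norm_of_nonneg (by positivity), Real.norm_of_nonneg (ascPochhammer_eval_pos hs n).le]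
      at h
    rw [mul_div_assoc', le_div_iff₀ hf]
    linarith
  have hsum := (hasSum_ascPochhammer_div_factorial s (add_nonneg hX hY) hXY).mul_left c
  obtain ⟨S, T⟩ := summable_and_tsum_le_of_le
    (f := fun n : ℕ => (n + 1 : ℝ) ^ (s - 1) * (X + Y) ^ n)
    (fun n => by positivity)
    (fun n => by
      rw [← mul_assoc]
      exact mul_le_mul_of_nonneg_right (hb n) (by positivity)) hsum.summable hsum.tsum_eq.le
  have h : HasSum (fun p => binomMonomial X Y p * powerWeight s 0 0 p)
      (∑' n : ℕ, (n + 1 : ℝ) ^ (s - 1) * (X + Y) ^ n) := by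
    refine hasSum_of_hasSum_antidiagonal
      (fun p => mul_nonneg (binomMonomial_nonneg hX hY p) (powerWeight_pos _ _ _ p).le) ?_
    refine S.hasSum.congr_fun fun n => ?_
    rw [← sum_antidiagonal_binomMonomial, Finset.mul_sum]
    refine Finset.sum_congr rfl fun p hp => ?_
    rw [Finset.HasAntidiagonal.mem_antidiagonal] at hp
    have hp' : (p.1 : ℝ) + p.2 = n := by exact_mod_cast hp
    simp only [powerWeight, hp', Real.rpow_zero]
    ring
  refine ⟨h.summable, ?_⟩
  rw [h.tsum_eq]
  refine T.trans_eq ?_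
  simp [sumProfile, sub_sub]

lemma profileDominates_of_zero {B σ : ℝ} (h : ∀ s, σ < s → ProfileDominates s 0 B) (A s : ℝ)
    (hs : σ + max (-A) 0 < s) : ProfileDominates s A B := by
  have up : ∀ i : ℕ, ∀ s, σ < s → ProfileDominates s i B := by
    intro i
    induction i with
    | zero => simpa using h
    | succ i ih =>
      intro s hs
      push_cast
      exact (ih s hs).add_one (ih (s + 1) (by linarith))
  have down : ∀ i : ℕ, ∀ s, σ + i < s → ProfileDominates s (-i) B := by
    intro i
    induction i with
    | zero => simpa using h
    | succ i ih =>
      intro s hs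
      push_cast at hs ⊢
      rw [neg_add']
      exact (ih s (by linarith)).sub_one (ih (s - 1) (by linarith))
  obtain ⟨i, hi⟩ := exists_nat_gt |A|
  have hi0 : (0 : ℝ) < i := (abs_nonneg A).trans_lt hi
  rcases le_total 0 A with hA | hA
  · rw [abs_of_nonneg hA] at hi
    rw [max_eq_right (by linarith), add_zero] at hs
    have hq : A / i ≤ 1 := (div_le_one hi0).2 hi.le
    have := (h s hs).interpolate (up i s hs) (u := 1 - A / i) (v := A / i)
      (by linarith) (by positivity) (by ring)
    convert this using 1 <;> field_simp <;> ring
  · rw [abs_of_nonpos hA] at hi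
    rw [max_eq_left (by linarith)] at hs
    have hq : -A / i ≤ 1 := (div_le_one hi0).2 hi.le
    have hq0 : 0 ≤ -A / i := div_nonneg (by linarith) hi0.le
    have := (h (s + A) (by linarith)).interpolate (down i (s + A + i) (by linarith))
      (u := 1 - -A / i) (v := -A / i) (by linarith) hq0 (by ring)
    convert this using 1 <;> field_simp <;> ring

lemma profileDominates {s A B : ℝ} (hs : max (-A) 0 + max (-B) 0 < s) :
    ProfileDominates s A B :=
  profileDominates_of_zero (σ := max (-B) 0) (fun t ht => ProfileDominates.swap
    (profileDominates_of_zero (σ := 0) (fun _ h => profileDominates_zero_zero h) B t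
      (by simpa using ht))) A s (by linarith)

lemma even_injective : Function.Injective fun p : ℕ × ℕ => (2 * p.1, 2 * p.2) := by
  rintro ⟨a, b⟩ ⟨c, d⟩ h
  simpa using h

lemma ProfileDominates.even {s A B : ℝ} (h : ProfileDominates s A B) :
    ∃ C : ℝ, 0 < C ∧ ∀ X Y : ℝ, 0 ≤ X → 0 ≤ Y → X + Y < 1 →
      Summable (fun p : ℕ × ℕ => binomMonomial X Y (2 * p.1, 2 * p.2) *
        powerWeight s A B (2 * p.1, 2 * p.2)) ∧
      ∑' p : ℕ × ℕ, binomMonomial X Y (2 * p.1, 2 * p.2) *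
        powerWeight s A B (2 * p.1, 2 * p.2) ≤ C * sumProfile s A B X Y := by
  obtain ⟨C, hC, H⟩ := h
  refine ⟨C, hC, fun X Y hX hY hXY => ?_⟩
  obtain ⟨S, T⟩ := H X Y hX hY hXY
  exact ⟨S.comp_injective even_injective, (tsum_comp_le_tsum_of_inj S (fun p => mul_nonneg
    (binomMonomial_nonneg hX hY p) (powerWeight_pos _ _ _ p).le) even_injective).trans T⟩

lemma exists_le_tsum_even_zero_zero {s : ℝ} (hs : 1 ≤ s) :
    ∃ c : ℝ, 0 < c ∧ ∀ X Y : ℝ, 0 ≤ X → 0 ≤ Y → X + Y < 1 →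
      c * sumProfile s 0 0 X Y ≤ ∑' p : ℕ × ℕ, binomMonomial X Y (2 * p.1, 2 * p.2) *
        powerWeight s 0 0 (2 * p.1, 2 * p.2) := by
  have hs0 : 0 < s := by linarith
  obtain ⟨C, -, hC⟩ := (profileDominates_zero_zero hs0).even
  obtain ⟨c, hc, H⟩ := (isTheta_ascPochhammer hs0).1.exists_pos
  rw [IsBigOWith_def, eventually_top] at H
  refine ⟨2 ^ (-s) / (2 * c), by positivity, fun X Y hX hY hXY => ?_⟩
  obtain ⟨S, -⟩ := hC X Y hX hY hXY
  have hδ : 0 < 1 - X - Y := by linarith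
  have hr1 : (X + Y) ^ 2 < 1 := by
    have : 0 ≤ X + Y := add_nonneg hX hY
    nlinarith
  have hb : ∀ n : ℕ, (ascPochhammer ℝ n).eval s / n.factorial ≤ c * (2 * n + 1 : ℝ) ^ (s - 1) := by
    intro n
    have h := H n
    have hf : (0 : ℝ) < n.factorial := by positivity
    rw [Real.norm_of_nonneg (ascPochhammer_eval_pos hs0 n).le, Real.norm_of_nonneg (by positivity)]
      at h
    have hm : (n + 1 : ℝ) ^ (s - 1) ≤ (2 * n + 1 : ℝ) ^ (s - 1) :=
      Real.rpow_le_rpow (by positivity) (by linarith [(n.cast_nonneg : (0 : ℝ) ≤ n)])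
        (by linarith)
    rw [div_le_iff₀ hf]
    calc _ ≤ _ := h
      _ ≤ c * (n.factorial * (2 * n + 1 : ℝ) ^ (s - 1)) := by gcongr
      _ = _ := by ring
  have hsum := hasSum_ascPochhammer_div_factorial s (sq_nonneg (X + Y)) hr1
  have hle : (1 - (X + Y) ^ 2) ^ (-s) ≤ 2 * c * ∑' p : ℕ × ℕ,
      binomMonomial X Y (2 * p.1, 2 * p.2) * powerWeight s 0 0 (2 * p.1, 2 * p.2) := by
    refine hasSum_le (fun n => ?_) hsum ((hasSum_antidiagonal S).mul_left (2 * c))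
    have he : ∑ p ∈ Finset.HasAntidiagonal.antidiagonal n, binomMonomial X Y (2 * p.1, 2 * p.2) *
        powerWeight s 0 0 (2 * p.1, 2 * p.2) = (2 * n + 1 : ℝ) ^ (s - 1) *
          (((X + Y) ^ (2 * n) + (-X + Y) ^ (2 * n)) / 2) := by
      rw [← sum_antidiagonal_two_mul_binomMonomial, Finset.mul_sum]
      refine Finset.sum_congr rfl fun p hp => ?_
      rw [Finset.HasAntidiagonal.mem_antidiagonal] at hp
      have hp' : (n : ℝ) = p.1 + p.2 := by exact_mod_cast hp.symm
      simp only [powerWeight, hp', Real.rpow_zero]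
      push_cast
      ring_nf
    have hsq : 0 ≤ (-X + Y) ^ (2 * n) := by rw [pow_mul]; positivity
    rw [he, ← pow_mul]
    calc _ ≤ c * (2 * n + 1 : ℝ) ^ (s - 1) * (X + Y) ^ (2 * n) :=
          mul_le_mul_of_nonneg_right (hb n) (by positivity)
      _ ≤ c * (2 * n + 1 : ℝ) ^ (s - 1) * ((X + Y) ^ (2 * n) + (-X + Y) ^ (2 * n)) := by
          gcongr; linarith
      _ = _ := by ring
  have hprof : 2 ^ (-s) * sumProfile s 0 0 X Y ≤ (1 - (X + Y) ^ 2) ^ (-s) := by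
    simp only [sumProfile, add_zero, Real.rpow_zero, mul_one]
    rw [← Real.mul_rpow (by norm_num) hδ.le]
    exact Real.rpow_le_rpow_of_nonpos (by linarith) (by nlinarith) (by linarith)
  rw [div_mul_eq_mul_div, div_le_iff₀ (by positivity)]
  linarith

/-- Two-sided bound for the even part of the weighted binomial sums. -/
lemma exists_even_sum_bounds {s A B : ℝ} (hs : max (-A) 0 + max (-B) 0 < s) :
    ∃ c C : ℝ, 0 < c ∧ 0 < C ∧ ∀ X Y : ℝ, 0 ≤ X → 0 ≤ Y → X + Y < 1 →
      Summable (fun p : ℕ × ℕ => binomMonomial X Y (2 * p.1, 2 * p.2) *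
        powerWeight s A B (2 * p.1, 2 * p.2)) ∧
      c * sumProfile s A B X Y ≤ ∑' p : ℕ × ℕ, binomMonomial X Y (2 * p.1, 2 * p.2) *
        powerWeight s A B (2 * p.1, 2 * p.2) ∧
      ∑' p : ℕ × ℕ, binomMonomial X Y (2 * p.1, 2 * p.2) *
        powerWeight s A B (2 * p.1, 2 * p.2) ≤ C * sumProfile s A B X Y := by
  obtain ⟨C, hC, H⟩ := (profileDominates hs).even
  set s₁ : ℝ := max A 0 + max B 0 + 2 with hs₁
  have hA0 := le_max_right A 0
  have hB0 := le_max_right B 0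
  have hA1 := le_max_right (-A) 0
  have hB1 := le_max_right (-B) 0
  obtain ⟨C₁, hC₁, H₁⟩ := (profileDominates (s := s₁) (A := -A) (B := -B)
    (by simp only [neg_neg]; linarith)).even
  obtain ⟨c, hc, H₀⟩ := exists_le_tsum_even_zero_zero (s := 1 / 2 * s + 1 / 2 * s₁) (by linarith)
  refine ⟨c ^ 2 / C₁, C, by positivity, hC, fun X Y hX hY hXY => ?_⟩
  obtain ⟨S, T⟩ := H X Y hX hY hXY
  obtain ⟨S₁, T₁⟩ := H₁ X Y hX hY hXY
  have L₀ := H₀ X Y hX hY hXY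
  refine ⟨S, ?_, T⟩
  have p := sumProfile_pos s A B hX hY hXY
  have p₁ := sumProfile_pos s₁ (-A) (-B) hX hY hXY
  have hP := sumProfile_interpolate s s₁ A (-A) B (-B) (1 / 2) (1 / 2) hX hY hXY
  have hz : ∀ a : ℝ, 1 / 2 * a + 1 / 2 * -a = 0 := fun a => by ring
  rw [hz, hz] at hP
  have p₀ := sumProfile_pos (1 / 2 * s + 1 / 2 * s₁) 0 0 hX hY hXY
  set P := sumProfile s A B X Y
  set P₁ := sumProfile s₁ (-A) (-B) X Y
  set P₀ := sumProfile (1 / 2 * s + 1 / 2 * s₁) 0 0 X Y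
  have hP2 : P₀ ^ 2 = P * P₁ := by
    rw [hP, mul_pow, ← Real.rpow_natCast, ← Real.rpow_natCast, ← Real.rpow_mul p.le,
      ← Real.rpow_mul p₁.le]
    norm_num
  set l : ℝ := C₁ / c * P₀ / P with hl
  have hlpos : 0 < l := by positivity
  set E := ∑' p : ℕ × ℕ, binomMonomial X Y (2 * p.1, 2 * p.2) *
    powerWeight s A B (2 * p.1, 2 * p.2)
  have hyoung : ∑' p : ℕ × ℕ, binomMonomial X Y (2 * p.1, 2 * p.2) *
      powerWeight (1 / 2 * s + 1 / 2 * s₁) 0 0 (2 * p.1, 2 * p.2) ≤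
      l / 2 * E + 1 / (2 * l) * (C₁ * P₁) := by
    refine (summable_and_tsum_le_of_le (M := l / 2 * E + 1 / (2 * l) * (C₁ * P₁))
      (fun q => mul_nonneg (binomMonomial_nonneg hX hY _) (powerWeight_pos _ _ _ _).le)
      (fun q => ?_) ((S.mul_left (l / 2)).add (S₁.mul_left (1 / (2 * l)))) ?_).2
    · have hw := powerWeight_interpolate s s₁ A (-A) B (-B) (1 / 2) (1 / 2) (by norm_num)
        (2 * q.1, 2 * q.2)
      rw [hz, hz] at hw
      have w := powerWeight_pos s A B (2 * q.1, 2 * q.2)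
      have w₁ := powerWeight_pos s₁ (-A) (-B) (2 * q.1, 2 * q.2)
      rw [hw]
      set W := powerWeight s A B (2 * q.1, 2 * q.2)
      set W₁ := powerWeight s₁ (-A) (-B) (2 * q.1, 2 * q.2)
      have hm := Real.geom_mean_le_arith_mean2_weighted (w₁ := 1 / 2) (w₂ := 1 / 2)
        (p₁ := l * W) (p₂ := W₁ / l) (by norm_num) (by norm_num) (by positivity) (by positivity)
        (by norm_num)
      rw [Real.mul_rpow hlpos.le w.le, Real.div_rpow w₁.le hlpos.le] at hm
      have hl2 : 0 < l ^ (1 / 2 : ℝ) := by positivity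
      calc _ ≤ binomMonomial X Y (2 * q.1, 2 * q.2) * (1 / 2 * (l * W) + 1 / 2 * (W₁ / l)) := by
            refine mul_le_mul_of_nonneg_left ?_ (binomMonomial_nonneg hX hY _)
            refine le_trans (le_of_eq ?_) hm
            field_simp
        _ = _ := by field_simp
    · rw [(S.mul_left _).tsum_add (S₁.mul_left _), tsum_mul_left, tsum_mul_left]
      gcongr
  have h1 : 1 / (2 * l) * (C₁ * P₁) = c * P₀ / 2 := by
    rw [hl]
    field_simp
    linear_combination (-1 : ℝ) * hP2
  rw [h1] at hyoung
  have h2 : c * P₀ ≤ l * E := by linarith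
  have h3 : c * P₀ = l * (c ^ 2 / C₁ * P) := by
    rw [hl]; field_simp
  rw [h3] at h2
  exact le_of_mul_le_mul_left h2 hlpos

end EvenSums

section Comparison

lemma isTheta_top_of_mul_le {ι : Type*} {f g : ι → ℝ} {c C : ℝ} (hc : 0 < c)
    (hg : ∀ i, 0 ≤ g i) (h : ∀ i, c * g i ≤ f i ∧ f i ≤ C * g i) : f =Θ[⊤] g := by
  have hf : ∀ i, 0 ≤ f i := fun i => (mul_nonneg hc.le (hg i)).trans (h i).1
  refine ⟨IsBigO.of_bound C (Eventually.of_forall fun i => ?_),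
    IsBigO.of_bound c⁻¹ (Eventually.of_forall fun i => ?_)⟩ <;>
  rw [Real.norm_of_nonneg (hf i), Real.norm_of_nonneg (hg i)]
  · exact (h i).2
  · rw [inv_mul_eq_div, le_div_iff₀' hc]
    exact (h i).1

lemma exists_mul_le_of_isTheta_top {ι : Type*} {f g : ι → ℝ} (hf : ∀ i, 0 ≤ f i)
    (hg : ∀ i, 0 ≤ g i) (h : f =Θ[⊤] g) :
    ∃ c C : ℝ, 0 < c ∧ 0 < C ∧ ∀ i, c * g i ≤ f i ∧ f i ≤ C * g i := by
  obtain ⟨C, hC, h₁⟩ := h.1.exists_pos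
  obtain ⟨c, hc, h₂⟩ := h.2.exists_pos
  rw [IsBigOWith_def, eventually_top] at h₁ h₂
  refine ⟨c⁻¹, C, inv_pos.2 hc, hC, fun i => ?_⟩
  have h₁' := h₁ i
  have h₂' := h₂ i
  rw [Real.norm_of_nonneg (hf i), Real.norm_of_nonneg (hg i)] at h₁' h₂'
  exact ⟨by rwa [inv_mul_eq_div, div_le_iff₀' hc], h₁'⟩

end Comparison

section Coefficients

lemma factorial_two_mul_eq_ascPochhammer (n : ℕ) :
    ((2 * n).factorial : ℝ) = 4 ^ n * n.factorial * (ascPochhammer ℝ n).eval (1 / 2) := by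
  induction n with
  | zero => simp
  | succ n ih =>
    rw [mul_add_one, Nat.factorial_succ, Nat.factorial_succ, Nat.factorial_succ,
      ascPochhammer_succ_eval]
    push_cast
    rw [ih]
    ring

lemma isTheta_factorial_two_mul :
    (fun n : ℕ => ((2 * n).factorial : ℝ)) =Θ[⊤]
      fun n : ℕ => 4 ^ n * (n.factorial : ℝ) * (n.factorial * (n + 1 : ℝ) ^ (1 / 2 - 1 : ℝ)) := by
  simp only [factorial_two_mul_eq_ascPochhammer]
  exact (isTheta_refl _ _).mul (isTheta_ascPochhammer (by norm_num))

lemma isTheta_two_mul_add_one : (fun n : ℕ => (2 * n + 1 : ℝ)) =Θ[⊤] fun n : ℕ => (n + 1 : ℝ) :=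
  isTheta_top_of_mul_le one_pos (C := 2) (fun n => by positivity) fun n => by
    have : (0 : ℝ) ≤ n := n.cast_nonneg
    constructor <;> linarith

lemma isTheta_two_mul_add_one_rpow (r : ℝ) :
    (fun n : ℕ => (2 * n + 1 : ℝ) ^ r) =Θ[⊤] fun n : ℕ => (n + 1 : ℝ) ^ r :=
  isTheta_two_mul_add_one.rpow
    (Eventually.of_forall fun n => by simp only [Pi.zero_apply]; positivity)
    (Eventually.of_forall fun n => by simp only [Pi.zero_apply]; positivity)

lemma isTheta_comp_top {ι κ : Type*} {f g : κ → ℝ} (h : f =Θ[⊤] g) (k : ι → κ) :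
    (fun i => f (k i)) =Θ[⊤] fun i => g (k i) :=
  ⟨h.1.comp_tendsto tendsto_top, h.2.comp_tendsto tendsto_top⟩

/-- The coefficient of `x ^ m * y ^ n` in `F4`, for `p = (m, n)`. -/
noncomputable def appellCoeff (a₁ a₂ b₁ b₂ : ℝ) (p : ℕ × ℕ) : ℝ :=
  (Polynomial.eval a₁ (ascPochhammer ℝ (p.1 + p.2)) *
    Polynomial.eval a₂ (ascPochhammer ℝ (p.1 + p.2))) /
  (Polynomial.eval b₁ (ascPochhammer ℝ p.1) * Polynomial.eval b₂ (ascPochhammer ℝ p.2) *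
    (Nat.factorial p.1) * (Nat.factorial p.2))

lemma appellCoeff_pos {a₁ a₂ b₁ b₂ : ℝ} (ha₁ : 0 < a₁) (ha₂ : 0 < a₂) (hb₁ : 0 < b₁)
    (hb₂ : 0 < b₂) (p : ℕ × ℕ) : 0 < appellCoeff a₁ a₂ b₁ b₂ p := by
  have h₁ := ascPochhammer_eval_pos ha₁ (p.1 + p.2)
  have h₂ := ascPochhammer_eval_pos ha₂ (p.1 + p.2)
  have h₃ := ascPochhammer_eval_pos hb₁ p.1
  have h₄ := ascPochhammer_eval_pos hb₂ p.2
  rw [appellCoeff]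
  positivity

lemma isTheta_appellCoeff {a₁ a₂ b₁ b₂ s : ℝ} (ha₁ : 0 < a₁) (ha₂ : 0 < a₂) (hb₁ : 0 < b₁)
    (hb₂ : 0 < b₂) (hs : a₁ + a₂ = s + 1 / 2) :
    appellCoeff a₁ a₂ b₁ b₂ =Θ[⊤] fun p =>
      ((2 * p.1 + 2 * p.2).choose (2 * p.1) : ℝ) *
        powerWeight s (1 / 2 - b₁) (1 / 2 - b₂) (2 * p.1, 2 * p.2) := by
  have hL := ((isTheta_comp_top (isTheta_ascPochhammer ha₁) fun p : ℕ × ℕ => p.1 + p.2).mul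
    (isTheta_comp_top (isTheta_ascPochhammer ha₂) fun p : ℕ × ℕ => p.1 + p.2)).div
    ((((isTheta_comp_top (isTheta_ascPochhammer hb₁) fun p : ℕ × ℕ => p.1).mul
    (isTheta_comp_top (isTheta_ascPochhammer hb₂) fun p : ℕ × ℕ => p.2)).mul
    (isTheta_refl (fun p : ℕ × ℕ => (p.1.factorial : ℝ)) ⊤)).mul
    (isTheta_refl (fun p : ℕ × ℕ => (p.2.factorial : ℝ)) ⊤))
  have hR := ((isTheta_comp_top isTheta_factorial_two_mul fun p : ℕ × ℕ => p.1 + p.2).div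
    ((isTheta_comp_top isTheta_factorial_two_mul fun p : ℕ × ℕ => p.1).mul
    (isTheta_comp_top isTheta_factorial_two_mul fun p : ℕ × ℕ => p.2))).mul
    (((isTheta_comp_top (isTheta_two_mul_add_one_rpow (s - 1)) fun p : ℕ × ℕ => p.1 + p.2).mul
    (isTheta_comp_top (isTheta_two_mul_add_one_rpow (1 / 2 - b₁)) fun p : ℕ × ℕ => p.1)).mul
    (isTheta_comp_top (isTheta_two_mul_add_one_rpow (1 / 2 - b₂)) fun p : ℕ × ℕ => p.2))
  refine (hL.trans_eventuallyEq (Eventually.of_forall fun p => ?_)).trans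
    (hR.symm.trans_eventuallyEq (Eventually.of_forall fun p => ?_))
  · obtain ⟨m, n⟩ := p
    have hN : (0 : ℝ) < ((m + n : ℕ) : ℝ) + 1 := by positivity
    have hm : (0 : ℝ) < (m : ℝ) + 1 := by positivity
    have hn : (0 : ℝ) < (n : ℝ) + 1 := by positivity
    have e₁ : (((m + n : ℕ) : ℝ) + 1) ^ (a₁ - 1) * (((m + n : ℕ) : ℝ) + 1) ^ (a₂ - 1) =
        (((m + n : ℕ) : ℝ) + 1) ^ (1 / 2 - 1 : ℝ) * (((m + n : ℕ) : ℝ) + 1) ^ (s - 1) := by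
      rw [← Real.rpow_add hN, ← Real.rpow_add hN]
      congr 1
      linarith
    have e₂ : ∀ b x : ℝ, 0 < x → x ^ (1 / 2 - b) = x ^ (1 / 2 - 1 : ℝ) / x ^ (b - 1) := by
      intro b x hx
      rw [← Real.rpow_sub hx]
      congr 1
      ring
    simp only [e₂ b₁ _ hm, e₂ b₂ _ hn, pow_add]
    set N := ((m + n : ℕ) : ℝ) + 1
    have p₁ : 0 < ((m : ℝ) + 1) ^ (1 / 2 - 1 : ℝ) := by positivity
    have p₂ : 0 < ((n : ℝ) + 1) ^ (1 / 2 - 1 : ℝ) := by positivity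
    have p₃ : 0 < ((m : ℝ) + 1) ^ (b₁ - 1 : ℝ) := by positivity
    have p₄ : 0 < ((n : ℝ) + 1) ^ (b₂ - 1 : ℝ) := by positivity
    have f₁ : (0 : ℝ) < m.factorial := by positivity
    have f₂ : (0 : ℝ) < n.factorial := by positivity
    generalize ((m : ℝ) + 1) ^ (1 / 2 - 1 : ℝ) = z₁ at *
    generalize ((n : ℝ) + 1) ^ (1 / 2 - 1 : ℝ) = z₂ at *
    generalize ((m : ℝ) + 1) ^ (b₁ - 1 : ℝ) = z₃ at *
    generalize ((n : ℝ) + 1) ^ (b₂ - 1 : ℝ) = z₄ at *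
    generalize N ^ (1 / 2 - 1 : ℝ) = z₅ at *
    generalize N ^ (s - 1 : ℝ) = z₆ at *
    generalize N ^ (a₁ - 1 : ℝ) = z₇ at *
    generalize N ^ (a₂ - 1 : ℝ) = z₈ at *
    field_simp
    linear_combination e₁
  · obtain ⟨m, n⟩ := p
    simp only [powerWeight, Nat.cast_add_choose, mul_add]
    push_cast
    ring_nf

/-- Two-sided bound for `F4` when `a₁ + a₂ = b₁ + b₂ + 1 / 2`. -/
lemma exists_F4_bounds {a₁ a₂ b₁ b₂ : ℝ} (ha₁ : 0 < a₁) (ha₂ : 0 < a₂) (hb₁ : 0 < b₁)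
    (hb₂ : 0 < b₂) (hab : a₁ + a₂ = b₁ + b₂ + 1 / 2) :
    ∃ c C : ℝ, 0 < c ∧ 0 < C ∧ ∀ X Y : ℝ, 0 ≤ X → 0 ≤ Y → X + Y < 1 →
      c * sumProfile (b₁ + b₂) (1 / 2 - b₁) (1 / 2 - b₂) X Y ≤ F4 a₁ a₂ b₁ b₂ (X ^ 2) (Y ^ 2) ∧
      F4 a₁ a₂ b₁ b₂ (X ^ 2) (Y ^ 2) ≤
        C * sumProfile (b₁ + b₂) (1 / 2 - b₁) (1 / 2 - b₂) X Y := by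
  obtain ⟨c, C, hc, hC, H⟩ := exists_mul_le_of_isTheta_top
    (fun p => (appellCoeff_pos ha₁ ha₂ hb₁ hb₂ p).le)
    (fun p => mul_nonneg (Nat.cast_nonneg _) (powerWeight_pos _ _ _ _).le)
    (isTheta_appellCoeff ha₁ ha₂ hb₁ hb₂ hab)
  have hmax : max (-(1 / 2 - b₁)) 0 + max (-(1 / 2 - b₂)) 0 < b₁ + b₂ := by
    rcases max_cases (-(1 / 2 - b₁)) 0 with h | h <;>
    rcases max_cases (-(1 / 2 - b₂)) 0 with h' | h' <;> linarith
  obtain ⟨c', C', hc', hC', H'⟩ := exists_even_sum_bounds hmax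
  refine ⟨c * c', C * C', by positivity, by positivity, fun X Y hX hY hXY => ?_⟩
  obtain ⟨S, h₁, h₂⟩ := H' X Y hX hY hXY
  set w : ℕ × ℕ → ℝ := fun p => binomMonomial X Y (2 * p.1, 2 * p.2) *
    powerWeight (b₁ + b₂) (1 / 2 - b₁) (1 / 2 - b₂) (2 * p.1, 2 * p.2) with hw
  have hF : F4 a₁ a₂ b₁ b₂ (X ^ 2) (Y ^ 2) =
      ∑' p : ℕ × ℕ, appellCoeff a₁ a₂ b₁ b₂ p * (X ^ (2 * p.1) * Y ^ (2 * p.2)) := by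
    simp only [F4, appellCoeff, pow_mul, mul_assoc]
  have hle : ∀ p : ℕ × ℕ,
      c * w p ≤ appellCoeff a₁ a₂ b₁ b₂ p * (X ^ (2 * p.1) * Y ^ (2 * p.2)) ∧
      appellCoeff a₁ a₂ b₁ b₂ p * (X ^ (2 * p.1) * Y ^ (2 * p.2)) ≤ C * w p := by
    intro p
    have hm : 0 ≤ X ^ (2 * p.1) * Y ^ (2 * p.2) := by positivity
    constructor
    · refine le_trans (le_of_eq ?_) (mul_le_mul_of_nonneg_right (H p).1 hm)
      simp only [hw, binomMonomial]
      ring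
    · refine le_trans (mul_le_mul_of_nonneg_right (H p).2 hm) (le_of_eq ?_)
      simp only [hw, binomMonomial]
      ring
  obtain ⟨S', T⟩ := summable_and_tsum_le_of_le (M := C * ∑' p, w p)
    (fun p => mul_nonneg (appellCoeff_pos ha₁ ha₂ hb₁ hb₂ p).le (by positivity))
    (fun p => (hle p).2) (S.mul_left C) tsum_mul_left.le
  have T' := (S.mul_left c).tsum_le_tsum (fun p => (hle p).1) S'
  rw [tsum_mul_left] at T'
  rw [hF, mul_assoc, mul_assoc]
  exact ⟨(mul_le_mul_of_nonneg_left h₁ hc.le).trans T',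
    T.trans (mul_le_mul_of_nonneg_left h₂ hC.le)⟩

end Coefficients

section Trigonometry

lemma one_add_sq_div_two_le_cosh (x : ℝ) : 1 + x ^ 2 / 2 ≤ Real.cosh x := by
  have h := Real.cosh_two_mul (x / 2)
  rw [mul_div_cancel₀ _ two_ne_zero] at h
  have h' : (x / 2) ^ 2 ≤ Real.sinh (x / 2) ^ 2 := by
    rw [sq_le_sq, Real.abs_sinh]
    exact Real.self_le_sinh_iff.2 (abs_nonneg _)
  rw [h, Real.cosh_sq]
  linarith

lemma cosh_le_one_add_sq {x : ℝ} (hx : |x| ≤ 1) : Real.cosh x ≤ 1 + x ^ 2 := by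
  have hx2 : x ^ 2 ≤ 1 := (sq_le_one_iff_abs_le_one x).2 hx
  have h := Real.exp_bound_div_one_sub_of_interval (x := x ^ 2 / 2) (by positivity) (by linarith)
  refine (Real.cosh_le_exp_half_sq x).trans (h.trans ?_)
  rw [div_le_iff₀ (by linarith)]
  nlinarith

lemma one_sub_cos_add_cos_bounds {t u v : ℝ} (ht0 : 0 < t) (ht1 : t ≤ 1) (hu : |u| ≤ π)
    (hv : |v| ≤ π) :
    (t ^ 2 + u ^ 2 + v ^ 2) / 32 ≤ 1 - (Real.cos u + Real.cos v) / 2 / Real.cosh (t / 2) ∧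
      1 - (Real.cos u + Real.cos v) / 2 / Real.cosh (t / 2) ≤ t ^ 2 + u ^ 2 + v ^ 2 := by
  have hc := one_add_sq_div_two_le_cosh (t / 2)
  have hc' := cosh_le_one_add_sq (x := t / 2) (by rw [abs_of_pos (by positivity)]; linarith)
  have hc1 := Real.one_le_cosh (t / 2)
  have ht2 : t ^ 2 ≤ 1 := by nlinarith
  have hpi : (1 : ℝ) / 8 ≤ 2 / π ^ 2 := by
    rw [div_le_div_iff₀ (by norm_num) (by positivity)]
    nlinarith [Real.pi_lt_four, Real.pi_pos]
  have hcos : ∀ w : ℝ, |w| ≤ π → Real.cos w ≤ 1 - w ^ 2 / 8 := fun w hw => by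
    have := Real.cos_le_one_sub_mul_cos_sq hw
    nlinarith [mul_le_mul_of_nonneg_right hpi (sq_nonneg w)]
  have hu1 := hcos u hu
  have hv1 := hcos v hv
  have hu2 := Real.one_sub_sq_div_two_le_cos (x := u)
  have hv2 := Real.one_sub_sq_div_two_le_cos (x := v)
  have e : 1 - (Real.cos u + Real.cos v) / 2 / Real.cosh (t / 2) =
      (Real.cosh (t / 2) - (Real.cos u + Real.cos v) / 2) / Real.cosh (t / 2) := by
    field_simp
  have hs : 0 ≤ t ^ 2 + u ^ 2 + v ^ 2 := by positivity
  rw [e, le_div_iff₀ (by positivity), div_le_iff₀ (by positivity)]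
  constructor
  · nlinarith [sq_nonneg u, sq_nonneg v]
  · nlinarith [sq_nonneg u, sq_nonneg v]

lemma one_sub_cos_mul_cos_bounds {t θ φ : ℝ} (ht0 : 0 < t) (ht1 : t ≤ 1)
    (hθ : θ ∈ Icc (0 : ℝ) π) (hφ : φ ∈ Icc (0 : ℝ) π) :
    1 / 64 * (t ^ 2 + θ ^ 2 + φ ^ 2) ≤
        1 - Real.cos (θ / 2) * Real.cos (φ / 2) / Real.cosh (t / 2) ∧
      1 - Real.cos (θ / 2) * Real.cos (φ / 2) / Real.cosh (t / 2) ≤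
        1 * (t ^ 2 + θ ^ 2 + φ ^ 2) := by
  obtain ⟨hθ0, hθ1⟩ := hθ
  obtain ⟨hφ0, hφ1⟩ := hφ
  have h := one_sub_cos_add_cos_bounds ht0 ht1 (u := θ / 2 - φ / 2) (v := θ / 2 + φ / 2)
    (abs_le.2 ⟨by linarith, by linarith⟩) (abs_le.2 ⟨by linarith, by linarith⟩)
  rw [Real.cos_sub, Real.cos_add] at h
  ring_nf at h ⊢
  constructor <;> nlinarith [h.1, h.2, sq_nonneg θ, sq_nonneg φ, sq_nonneg t]

lemma one_sub_sin_mul_sin_bounds {t θ φ : ℝ} (ht0 : 0 < t) (ht1 : t ≤ 1)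
    (hθ : θ ∈ Icc (0 : ℝ) π) (hφ : φ ∈ Icc (0 : ℝ) π) :
    1 / 64 * (t ^ 2 + (π - θ) ^ 2 + (π - φ) ^ 2) ≤
        1 - Real.sin (θ / 2) * Real.sin (φ / 2) / Real.cosh (t / 2) ∧
      1 - Real.sin (θ / 2) * Real.sin (φ / 2) / Real.cosh (t / 2) ≤
        1 * (t ^ 2 + (π - θ) ^ 2 + (π - φ) ^ 2) := by
  have h := one_sub_cos_mul_cos_bounds ht0 ht1 (θ := π - θ) (φ := π - φ)
    ⟨by linarith [hθ.2], by linarith [hθ.1]⟩ ⟨by linarith [hφ.2], by linarith [hφ.1]⟩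
  rwa [sub_div, sub_div, Real.cos_pi_div_two_sub, Real.cos_pi_div_two_sub] at h

lemma one_sub_sub_bounds {t θ φ : ℝ} (ht0 : 0 < t) (ht1 : t ≤ 1)
    (hθ : θ ∈ Icc (0 : ℝ) π) (hφ : φ ∈ Icc (0 : ℝ) π) :
    1 / 64 * (t ^ 2 + (θ - φ) ^ 2) ≤
        1 - Real.sin (θ / 2) * Real.sin (φ / 2) / Real.cosh (t / 2) -
          Real.cos (θ / 2) * Real.cos (φ / 2) / Real.cosh (t / 2) ∧
      1 - Real.sin (θ / 2) * Real.sin (φ / 2) / Real.cosh (t / 2) -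
          Real.cos (θ / 2) * Real.cos (φ / 2) / Real.cosh (t / 2) ≤
        1 * (t ^ 2 + (θ - φ) ^ 2) := by
  obtain ⟨hθ0, hθ1⟩ := hθ
  obtain ⟨hφ0, hφ1⟩ := hφ
  have hu : |θ / 2 - φ / 2| ≤ π := abs_le.2 ⟨by linarith, by linarith⟩
  have h := one_sub_cos_add_cos_bounds ht0 ht1 hu hu
  rw [Real.cos_sub] at h
  ring_nf at h ⊢
  constructor <;> nlinarith [h.1, h.2, sq_nonneg (θ - φ), sq_nonneg t]

lemma mul_sinh_div_cosh_rpow_bounds {s t : ℝ} (hs : 0 < s) (ht0 : 0 < t) (ht1 : t ≤ 1) :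
    2 ^ (-s) / 2 * t ≤ Real.sinh (t / 2) / Real.cosh (t / 2) ^ s ∧
      Real.sinh (t / 2) / Real.cosh (t / 2) ^ s ≤ 1 * t := by
  have hc1 := Real.one_le_cosh (t / 2)
  have hc2 := cosh_le_one_add_sq (x := t / 2) (by rw [abs_of_pos (by positivity)]; linarith)
  have hsinh : t / 2 ≤ Real.sinh (t / 2) := Real.self_le_sinh_iff.2 (by positivity)
  have hsinh' : Real.sinh (t / 2) ≤ t := by
    refine abs_le_of_sq_le_sq' ?_ ht0.le |>.2
    have hc3 : Real.cosh (t / 2) ^ 2 ≤ (1 + (t / 2) ^ 2) ^ 2 := by gcongr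
    rw [Real.sinh_sq]
    nlinarith [mul_nonneg (sq_nonneg t) (sub_nonneg.2 (pow_le_one₀ ht0.le ht1 : t ^ 2 ≤ 1))]
  have h1 : 1 ≤ Real.cosh (t / 2) ^ s := Real.one_le_rpow hc1 hs.le
  have h2 : Real.cosh (t / 2) ^ s ≤ 2 ^ s :=
    Real.rpow_le_rpow (by linarith) (by nlinarith) hs.le
  rw [one_mul]
  constructor
  · rw [Real.rpow_neg two_pos.le, le_div_iff₀ (by linarith)]
    have h3 : (0 : ℝ) < 2 ^ s := by positivity
    calc _ ≤ (2 ^ s : ℝ)⁻¹ / 2 * t * 2 ^ s := by gcongr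
      _ = t / 2 := by field_simp
      _ ≤ _ := hsinh
  · exact (div_le_self (by linarith) h1).trans hsinh'

end Trigonometry

lemma cab_pos {α β : ℝ} (hα : -1 < α) (hβ : -1 < β) : 0 < cab α β := by
  have h₁ := Real.Gamma_pos_of_pos (s := α + β + 2) (by linarith)
  have h₂ := Real.Gamma_pos_of_pos (s := α + 1) (by linarith)
  have h₃ := Real.Gamma_pos_of_pos (s := β + 1) (by linarith)
  rw [cab]
  positivity

theorem jacobi_poisson_sharp_short_time (α β : ℝ) (hα : -1 < α) (hβ : -1 < β) :
    ∃ c C : ℝ, 0 < c ∧ c ≤ C ∧ ∀ t : ℝ, 0 < t → t ≤ 1 →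
      ∀ θ ∈ Icc (0 : ℝ) π, ∀ φ ∈ Icc (0 : ℝ) π,
      c * ((t ^ 2 + θ ^ 2 + φ ^ 2) ^ (-α - 1/2) *
          (t ^ 2 + (π - θ) ^ 2 + (π - φ) ^ 2) ^ (-β - 1/2) *
          (t / (t ^ 2 + (θ - φ) ^ 2)))
        ≤ Hker α β t θ φ ∧
      Hker α β t θ φ ≤
        C * ((t ^ 2 + θ ^ 2 + φ ^ 2) ^ (-α - 1/2) *
          (t ^ 2 + (π - θ) ^ 2 + (π - φ) ^ 2) ^ (-β - 1/2) *
          (t / (t ^ 2 + (θ - φ) ^ 2))) := by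
  obtain ⟨c₀, C₀, hc₀, hC₀, H₀⟩ := exists_F4_bounds (a₁ := (α + β + 2) / 2)
    (a₂ := (α + β + 3) / 2) (b₁ := α + 1) (b₂ := β + 1) (by linarith) (by linarith)
    (by linarith) (by linarith) (by ring)
  let I := {p : ℝ × ℝ × ℝ // (0 < p.1 ∧ p.1 ≤ 1) ∧ p.2.1 ∈ Icc (0 : ℝ) π ∧ p.2.2 ∈ Icc (0 : ℝ) π}
  let X : I → ℝ := fun i => Real.sin (i.1.2.1 / 2) * Real.sin (i.1.2.2 / 2) / Real.cosh (i.1.1 / 2)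
  let Y : I → ℝ := fun i => Real.cos (i.1.2.1 / 2) * Real.cos (i.1.2.2 / 2) / Real.cosh (i.1.1 / 2)
  have hD : (fun i : I => 1 - X i - Y i) =Θ[⊤] fun i : I => i.1.1 ^ 2 + (i.1.2.1 - i.1.2.2) ^ 2 :=
    isTheta_top_of_mul_le (by norm_num) (fun i => by positivity) fun i =>
      one_sub_sub_bounds i.2.1.1 i.2.1.2 i.2.2.1 i.2.2.2
  have hY : (fun i : I => 1 - Y i) =Θ[⊤] fun i : I => i.1.1 ^ 2 + i.1.2.1 ^ 2 + i.1.2.2 ^ 2 :=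
    isTheta_top_of_mul_le (by norm_num) (fun i => by positivity) fun i =>
      one_sub_cos_mul_cos_bounds i.2.1.1 i.2.1.2 i.2.2.1 i.2.2.2
  have hX : (fun i : I => 1 - X i) =Θ[⊤]
      fun i : I => i.1.1 ^ 2 + (π - i.1.2.1) ^ 2 + (π - i.1.2.2) ^ 2 :=
    isTheta_top_of_mul_le (by norm_num) (fun i => by positivity) fun i =>
      one_sub_sin_mul_sin_bounds i.2.1.1 i.2.1.2 i.2.2.1 i.2.2.2
  have hT : (fun i : I => Real.sinh (i.1.1 / 2) / Real.cosh (i.1.1 / 2) ^ (α + β + 2)) =Θ[⊤]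
      fun i : I => i.1.1 :=
    isTheta_top_of_mul_le (by positivity) (fun i => i.2.1.1.le) fun i =>
      mul_sinh_div_cosh_rpow_bounds (by linarith) i.2.1.1 i.2.1.2
  have hX0 : ∀ i, 0 ≤ X i := fun i => by
    obtain ⟨⟨t, θ, φ⟩, -, hθ, hφ⟩ := i
    exact div_nonneg (mul_nonneg
      (Real.sin_nonneg_of_nonneg_of_le_pi (by linarith [hθ.1]) (by linarith [hθ.1, hθ.2]))
      (Real.sin_nonneg_of_nonneg_of_le_pi (by linarith [hφ.1]) (by linarith [hφ.1, hφ.2])))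
      (Real.cosh_pos _).le
  have hY0 : ∀ i, 0 ≤ Y i := fun i => by
    obtain ⟨⟨t, θ, φ⟩, -, hθ, hφ⟩ := i
    exact div_nonneg (mul_nonneg
      (Real.cos_nonneg_of_mem_Icc ⟨by linarith [hθ.1, Real.pi_pos], by linarith [hθ.2]⟩)
      (Real.cos_nonneg_of_mem_Icc ⟨by linarith [hφ.1, Real.pi_pos], by linarith [hφ.2]⟩))
      (Real.cosh_pos _).le
  have hXY : ∀ i, X i + Y i < 1 := fun i => by
    have h := (one_sub_sub_bounds i.2.1.1 i.2.1.2 i.2.2.1 i.2.2.2).1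
    have ht := sq_pos_of_pos i.2.1.1
    have hd := sq_nonneg (i.1.2.1 - i.1.2.2)
    change _ ≤ 1 - X i - Y i at h
    linarith
  have hF : (fun i : I => F4 ((α + β + 2) / 2) ((α + β + 3) / 2) (α + 1) (β + 1)
      (X i ^ 2) (Y i ^ 2)) =Θ[⊤] fun i : I => sumProfile (α + 1 + (β + 1)) (1 / 2 - (α + 1))
        (1 / 2 - (β + 1)) (X i) (Y i) :=
    isTheta_top_of_mul_le hc₀ (fun i => (sumProfile_pos _ _ _ (hX0 i) (hY0 i) (hXY i)).le)
      fun i => H₀ _ _ (hX0 i) (hY0 i) (hXY i)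
  have hP := ((hD.rpow (r := -(α + 1 + (β + 1) + (1 / 2 - (α + 1)) + (1 / 2 - (β + 1))))
      (Eventually.of_forall fun i => by simp only [Pi.zero_apply]; linarith [hXY i])
      (Eventually.of_forall fun i => by simp only [Pi.zero_apply]; positivity)).mul
    (hY.rpow (r := 1 / 2 - (α + 1))
      (Eventually.of_forall fun i => by simp only [Pi.zero_apply]; linarith [hXY i, hX0 i])
      (Eventually.of_forall fun i => by simp only [Pi.zero_apply]; positivity))).mul
    (hX.rpow (r := 1 / 2 - (β + 1))
      (Eventually.of_forall fun i => by simp only [Pi.zero_apply]; linarith [hXY i, hY0 i])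
      (Eventually.of_forall fun i => by simp only [Pi.zero_apply]; positivity))
  have hH : (fun i : I => Hker α β i.1.1 i.1.2.1 i.1.2.2) =Θ[⊤] fun i : I =>
      (i.1.1 ^ 2 + i.1.2.1 ^ 2 + i.1.2.2 ^ 2) ^ (-α - 1/2) *
        (i.1.1 ^ 2 + (π - i.1.2.1) ^ 2 + (π - i.1.2.2) ^ 2) ^ (-β - 1/2) *
        (i.1.1 / (i.1.1 ^ 2 + (i.1.2.1 - i.1.2.2) ^ 2)) := by
    have hc : (fun _ : I => cab α β) =Θ[⊤] fun _ : I => (1 : ℝ) :=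
      isTheta_const_const (cab_pos hα hβ).ne' one_ne_zero
    refine (EventuallyEq.isTheta (Eventually.of_forall fun i => ?_)).trans
      (((hc.mul hT).mul (hF.trans hP)).trans_eventuallyEq (Eventually.of_forall fun i => ?_))
    · exact congrArg (· * _) (mul_div_assoc _ _ _)
    · have e₁ : -(α + 1 + (β + 1) + (1 / 2 - (α + 1)) + (1 / 2 - (β + 1))) = (-1 : ℝ) := by ring
      have e₂ : 1 / 2 - (α + 1) = -α - 1 / 2 := by ring
      have e₃ : 1 / 2 - (β + 1) = -β - 1 / 2 := by ring
      simp only [e₁, Real.rpow_neg_one]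
      rw [e₂, e₃]
      ring
  have hH0 : ∀ i : I, 0 ≤ Hker α β i.1.1 i.1.2.1 i.1.2.2 := fun i => by
    have h₁ := sumProfile_pos (α + 1 + (β + 1)) (1 / 2 - (α + 1)) (1 / 2 - (β + 1))
      (hX0 i) (hY0 i) (hXY i)
    have h₂ := Real.sinh_nonneg_iff.2 (half_pos i.2.1.1).le
    have h₃ := (H₀ _ _ (hX0 i) (hY0 i) (hXY i)).1
    exact mul_nonneg (div_nonneg (mul_nonneg (cab_pos hα hβ).le h₂) (by positivity))
      ((by positivity : (0 : ℝ) ≤ c₀ * sumProfile _ _ _ (X i) (Y i)).trans h₃)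
  obtain ⟨c, C, hc, -, H⟩ := exists_mul_le_of_isTheta_top hH0 (fun i => by
    have := i.2.1.1
    positivity) hH
  refine ⟨c, max c C, hc, le_max_left _ _, fun t ht0 ht1 θ hθ φ hφ => ?_⟩
  have h := H ⟨(t, θ, φ), ⟨ht0, ht1⟩, hθ, hφ⟩
  exact ⟨h.1, h.2.trans (mul_le_mul_of_nonneg_right (le_max_right _ _) (by positivity))⟩
end
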